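/- arXiv:2412.15782 — 2 statements merged into one kernel-verified Lean document; each statement's English description precedes it below -/
import Mathlib

section
/- For every inverse temperature β ∈ (0,∞), every exponent q ∈ (0,2) and every range exponent α ∈ (1,∞), there exists a constant C_β < ∞ (depending only on β, α and q) such that for every integer N ≥ 2, the variance of the height at the origin under the discrete q-SOS long-range chain satisfies: Var^{q-SOS}_{N,β,α}[φ(0)] ≤ C_β if α < q; Var^{q-SOS}_{N,β,α}[φ(0)] ≤ C_β ln N if α = q; and Var^{q-SOS}_{N,β,α}[φ(0)] ≤ C_β N^{2α/q − 2} if α > q. -/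
noncomputable section

/-- Configurations of the long-range chain of length `N`: integer-valued height functions
on `ℤ` vanishing outside `{-N, …, N}`. -/
def ChainConfig (N : ℕ) : Type :=
  {φ : ℤ → ℤ // ∀ k : ℤ, (N : ℤ) < |k| → φ k = 0}

/-- Energy `β ∑_{i ≠ j} |φ(i) − φ(j)|^q / |i − j|^α` of a configuration of the long-range
chain with potential exponent `q` and range exponent `α`. -/
def chainEnergy (β α q : ℝ) (φ : ℤ → ℤ) : ℝ :=
  β * ∑' p : ℤ × ℤ,
      if p.1 = p.2 then 0
      else |((φ p.1 - φ p.2 : ℤ) : ℝ)| ^ q / |((p.1 - p.2 : ℤ) : ℝ)| ^ α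

/-- Boltzmann weight of a configuration. -/
def chainWeight (β α q : ℝ) (φ : ℤ → ℤ) : ℝ :=
  Real.exp (-chainEnergy β α q φ)

/-- Partition function of the long-range chain. -/
def chainZ (N : ℕ) (β α q : ℝ) : ℝ :=
  ∑' φ : ChainConfig N, chainWeight β α q φ.val

/-- Mean of the height at the origin. -/
def chainMean (N : ℕ) (β α q : ℝ) : ℝ :=
  (∑' φ : ChainConfig N, ((φ.val 0 : ℤ) : ℝ) * chainWeight β α q φ.val) / chainZ N β α q

/-- Variance of the height at the origin under the long-range chain `μ_{N,β,α}`
(with potential exponent `q`; `q = 2` is the discrete Gaussian chain,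
`q ∈ (0,2)` the `q`-SOS chain). -/
def chainVar (N : ℕ) (β α q : ℝ) : ℝ :=
  (∑' φ : ChainConfig N, ((φ.val 0 : ℤ) : ℝ) ^ 2 * chainWeight β α q φ.val) / chainZ N β α q
    - chainMean N β α q ^ 2

end

/-!
The variance bound is a Thomson principle, proved by a monotonicity argument in the style of
Regev and Stephens-Davidowitz. Let `W` be a potential on a torsion-free abelian group `B` with
`W (2 • x) = 2 ^ q * W x` whose parallelogram defect `2 W s + 2 W d - W (s + d) - W (s - d)` is a
positive semidefinite kernel; `|x| ^ q` is such a potential on `ℝ` for `0 < q ≤ 2`. For an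
injective homomorphism `ι : A → B` and an additive `L : B → ℝ`, put `s = ι a + b` and
`d = b - ι a`. Up to a factor `g s * g d`, the quantity
`exp (-W (ι a) - W b) * (L b ^ 2 - L (ι a) ^ 2)` is then `L s * L d` times the exponential of a
multiple of the parallelogram defect, a positive semidefinite kernel in `(s, d)`. Its sum is
therefore nonnegative: restricting `exp (-W)` to the subgroup `ι A` can only decrease second
moments of additive functionals.

Embed the configurations `a` as the graph `a ↦ (a, D a)` of the gradient `D` along finitely many
bonds `e`, in which half of the coupling `J e` is carried by a new, independent, integer variable.
If `θ` is a unit flow from the origin to the outside of the box, then `φ 0 = ∑ e, θ e * D e φ`, and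
the monotonicity gives `Var (φ 0) ≤ C_q * ∑ e, θ e ^ 2 * J e ^ (-2 / q)`. The flow that spreads
uniformly from each dyadic block `[2 ^ k - 1, 2 ^ (k + 1) - 1)` to the next costs a multiple of
`2 ^ ((2 * α / q - 2) * k)` at scale `k`, and the three regimes are those of this geometric sum.
-/

open Filter Finset MeasureTheory Topology

section PosSemidef

variable {X : Type*}

theorem posSemidef_iff_forall_finset {M : Matrix X X ℝ} :
    M.PosSemidef ↔ (∀ s d, M s d = M d s) ∧
      ∀ (T : Finset X) (c : X → ℝ), 0 ≤ ∑ s ∈ T, ∑ d ∈ T, c s * M s d * c d := by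
  classical
  refine and_congr ?_ ⟨fun h T c => ?_, fun h x => h x.support x⟩
  · simp only [Matrix.IsHermitian.ext_iff, star_trivial]
    exact forall_comm
  · let x : X →₀ ℝ := Finsupp.onFinset T (fun s => if s ∈ T then c s else 0) (by simp +contextual)
    have hx : ∀ s ∈ T, x s = c s := fun s hs => by simp [x, hs]
    have hsub : x.support ⊆ T := Finsupp.support_onFinset_subset
    have key := h x
    rw [Finsupp.sum_of_support_subset _ hsub _ (by simp)] at key
    refine key.trans_eq (sum_congr rfl fun s hs => ?_)
    rw [Finsupp.sum_of_support_subset _ hsub _ (by simp)]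
    exact sum_congr rfl fun d hd => by simp [hx s hs, hx d hd]

theorem posSemidef_vecMulVec_self (v : X → ℝ) : (Matrix.vecMulVec v v).PosSemidef := by
  refine posSemidef_iff_forall_finset.2 ⟨fun s d => mul_comm _ _, fun T c => ?_⟩
  calc 0 ≤ (∑ s ∈ T, c s * v s) * ∑ d ∈ T, c d * v d := mul_self_nonneg _
    _ = ∑ s ∈ T, ∑ d ∈ T, c s * Matrix.vecMulVec v v s d * c d := by
      rw [sum_mul_sum]
      exact sum_congr rfl fun s _ => sum_congr rfl fun d _ => by
        rw [Matrix.vecMulVec_apply]; ring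

theorem posSemidef_of_tendsto {ι : Type*} {l : Filter ι} [l.NeBot] {M : ι → Matrix X X ℝ}
    {M₀ : Matrix X X ℝ} (hM : ∀ i, (M i).PosSemidef)
    (h : ∀ s d, Tendsto (fun i => M i s d) l (𝓝 (M₀ s d))) : M₀.PosSemidef := by
  simp only [posSemidef_iff_forall_finset] at hM ⊢
  refine ⟨fun s d => ?_, fun T c => ?_⟩
  · exact tendsto_nhds_unique (h s d) ((h d s).congr fun i => (hM i).1 d s)
  · exact ge_of_tendsto' (tendsto_finsetSum _ fun s _ => tendsto_finsetSum _ fun d _ =>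
      ((h s d).const_mul (c s)).mul_const (c d)) fun i => (hM i).2 T c

theorem posSemidef_of_hasSum {ι : Type*} {M : ι → Matrix X X ℝ} {M₀ : Matrix X X ℝ}
    (hM : ∀ i, (M i).PosSemidef) (h : ∀ s d, HasSum (fun i => M i s d) (M₀ s d)) :
    M₀.PosSemidef :=
  posSemidef_of_tendsto (fun F : Finset ι => Matrix.posSemidef_sum F fun i _ => hM i)
    fun s d => by
      simpa only [Matrix.sum_apply, HasSum, SummationFilter.unconditional_filter] using h s d

theorem posSemidef_map_exp {M : Matrix X X ℝ} (hM : M.PosSemidef) :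
    (M.map Real.exp).PosSemidef := by
  have hpow : ∀ n : ℕ, (M.map (· ^ n)).PosSemidef := fun n => by
    induction n with
    | zero => simpa [Matrix.map, Matrix.vecMulVec] using posSemidef_vecMulVec_self (1 : X → ℝ)
    | succ n ih =>
      simp only [pow_succ]
      exact ih.hadamard hM
  have hterm : ∀ n : ℕ, ((n.factorial : ℝ)⁻¹ • M.map (· ^ n)).PosSemidef := fun n =>
    (hpow n).smul (by positivity)
  refine posSemidef_of_hasSum hterm fun s d => ?_
  simpa [div_eq_inv_mul, Real.exp_eq_exp_ℝ] using NormedSpace.expSeries_div_hasSum_exp (M s d)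

theorem posSemidef_integral {Ω : Type*} [MeasurableSpace Ω] {μ : Measure Ω}
    {M : Ω → Matrix X X ℝ} (hM : ∀ᵐ t ∂μ, (M t).PosSemidef)
    (hint : ∀ s d, Integrable (fun t => M t s d) μ) :
    (Matrix.of fun s d => ∫ t, M t s d ∂μ).PosSemidef := by
  simp only [posSemidef_iff_forall_finset, Matrix.of_apply] at hM ⊢
  refine ⟨fun s d => integral_congr_ae <| hM.mono fun t ht => ht.1 s d, fun T c => ?_⟩
  have hint' : ∀ s d, Integrable (fun t => c s * M t s d * c d) μ := fun s d =>
    ((hint s d).const_mul (c s)).mul_const (c d)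
  simp_rw [← integral_const_mul, ← integral_mul_const]
  simp_rw [← integral_finsetSum T fun d _ => hint' _ d]
  rw [← integral_finsetSum T fun s _ => integrable_finsetSum T fun d _ => hint' s d]
  exact integral_nonneg_of_ae (hM.mono fun t ht => ht.2 T c)

theorem tsum_nonneg_of_posSemidef {M : Matrix X X ℝ} (hM : M.PosSemidef) :
    0 ≤ ∑' p : X × X, M p.1 p.2 := by
  by_cases hs : Summable fun p : X × X => M p.1 p.2
  · have hT : Tendsto (fun T : Finset X => T ×ˢ T) atTop atTop :=
      tendsto_finsetProd_atTop.comp tendsto_atTop_diagonal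
    refine ge_of_tendsto' (hs.hasSum.comp hT) fun T => ?_
    simpa [sum_product] using (posSemidef_iff_forall_finset.1 hM).2 T 1
  · rw [tsum_eq_zero_of_not_summable hs]

end PosSemidef

section StablePotential

variable {G H : Type*} [AddCommGroup G] [AddCommGroup H]

/-- The failure of the parallelogram identity for `W`, as a kernel on `G`. It vanishes when `W` is
a quadratic form. -/
def parallelogramDefect (W : G → ℝ) : Matrix G G ℝ :=
  Matrix.of fun s d => 2 * W s + 2 * W d - W (s + d) - W (s - d)

theorem parallelogramDefect_const_mul (c : ℝ) (W : G → ℝ) :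
    parallelogramDefect (fun x => c * W x) = c • parallelogramDefect W := by
  ext s d
  simp only [parallelogramDefect, Matrix.of_apply, Matrix.smul_apply, smul_eq_mul]
  ring

theorem posSemidef_parallelogramDefect_integral {Ω : Type*} [MeasurableSpace Ω] {μ : Measure Ω}
    {F : Ω → G → ℝ} (hF : ∀ᵐ t ∂μ, (parallelogramDefect (F t)).PosSemidef)
    (hint : ∀ x, Integrable (fun t => F t x) μ) :
    (parallelogramDefect fun x => ∫ t, F t x ∂μ).PosSemidef := by
  have hlin : ∀ s d, Integrable (fun t => 2 * F t s + 2 * F t d) μ := fun s d =>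
    ((hint s).const_mul 2).add ((hint d).const_mul 2)
  have hdiff : ∀ s d, Integrable (fun t => 2 * F t s + 2 * F t d - F t (s + d)) μ := fun s d =>
    (hlin s d).sub (hint (s + d))
  convert posSemidef_integral hF fun s d => (hdiff s d).sub (hint (s - d)) using 1
  ext s d
  simp only [parallelogramDefect, Matrix.of_apply]
  rw [integral_sub (hdiff s d) (hint _), integral_sub (hlin s d) (hint _),
    integral_add ((hint s).const_mul 2) ((hint d).const_mul 2), integral_const_mul,
    integral_const_mul]

/-- Potentials `W` on an abelian group that behave like `|x| ^ q` with `q ≤ 2`: they are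
homogeneous of degree `q` under doubling and their parallelogram defect is a positive semidefinite
kernel, so that `exp (-W)` is a discrete analogue of a symmetric `q`-stable characteristic
function. -/
structure IsStablePotential (q : ℝ) (W : G → ℝ) : Prop where
  posSemidef_defect : (parallelogramDefect W).PosSemidef
  map_add_self : ∀ x, W (x + x) = 2 ^ q * W x

namespace IsStablePotential

variable {q : ℝ} {W V : G → ℝ}

theorem comp {W : H → ℝ} (hW : IsStablePotential q W) (f : G →+ H) :
    IsStablePotential q fun x => W (f x) where
  posSemidef_defect := by
    convert hW.posSemidef_defect.submatrix f using 1
    ext s d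
    simp only [parallelogramDefect, Matrix.of_apply, Matrix.submatrix_apply, map_add, map_sub]
  map_add_self x := by rw [map_add, hW.map_add_self]

theorem hasSum {ι : Type*} {W : ι → G → ℝ} (hW : ∀ i, IsStablePotential q (W i))
    (h : ∀ x, HasSum (fun i => W i x) (V x)) : IsStablePotential q V where
  posSemidef_defect := posSemidef_of_hasSum (fun i => (hW i).posSemidef_defect) fun s d =>
    ((((h s).mul_left 2).add ((h d).mul_left 2)).sub (h (s + d))).sub (h (s - d))
  map_add_self x := (h (x + x)).unique <| by
    simpa only [(hW _).map_add_self] using (h x).mul_left (2 ^ q)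

theorem add (hW : IsStablePotential q W) (hV : IsStablePotential q V) :
    IsStablePotential q fun x => W x + V x where
  posSemidef_defect := by
    convert hW.posSemidef_defect.add hV.posSemidef_defect using 1
    ext s d
    simp only [parallelogramDefect, Matrix.of_apply, Matrix.add_apply]
    ring
  map_add_self x := by rw [hW.map_add_self, hV.map_add_self, mul_add]

theorem const_mul (hW : IsStablePotential q W) {c : ℝ} (hc : 0 ≤ c) :
    IsStablePotential q fun x => c * W x where
  posSemidef_defect := parallelogramDefect_const_mul c W ▸ hW.posSemidef_defect.smul hc
  map_add_self x := by rw [hW.map_add_self, mul_left_comm]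

end IsStablePotential

theorem integrableOn_one_sub_cos_mul_rpow {q : ℝ} (hq₀ : 0 < q) (hq₂ : q < 2) (x : ℝ) :
    IntegrableOn (fun t : ℝ => (1 - Real.cos (t * x)) * t ^ (-1 - q)) (Set.Ioi 0) := by
  have hmeas : Measurable fun t : ℝ => (1 - Real.cos (t * x)) * t ^ (-1 - q) := by fun_prop
  have hnorm : ∀ t : ℝ, 0 < t → ‖(1 - Real.cos (t * x)) * t ^ (-1 - q)‖
      = (1 - Real.cos (t * x)) * t ^ (-1 - q) := fun t ht =>
    Real.norm_of_nonneg
      (mul_nonneg (sub_nonneg.2 (Real.cos_le_one _)) (Real.rpow_nonneg ht.le _))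
  rw [← Set.Ioc_union_Ioi_eq_Ioi (zero_le_one' ℝ)]
  refine IntegrableOn.union ?near_zero ?near_infinity
  case near_zero =>
    have hdom : IntegrableOn (fun t : ℝ => x ^ 2 / 2 * t ^ (1 - q)) (Set.Ioc 0 1) :=
      (intervalIntegrable_iff_integrableOn_Ioc_of_le zero_le_one).1
        ((intervalIntegral.intervalIntegrable_rpow' (by linarith)).const_mul _)
    refine hdom.mono' hmeas.aestronglyMeasurable <|
      (ae_restrict_iff' measurableSet_Ioc).2 <| .of_forall fun t ht => ?_
    have hsplit : t ^ (1 - q) = t ^ 2 * t ^ (-1 - q) := by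
      rw [← Real.rpow_natCast, ← Real.rpow_add ht.1]
      ring_nf
    calc ‖(1 - Real.cos (t * x)) * t ^ (-1 - q)‖
        = (1 - Real.cos (t * x)) * t ^ (-1 - q) := hnorm t ht.1
      _ ≤ ((t * x) ^ 2 / 2) * t ^ (-1 - q) :=
        mul_le_mul_of_nonneg_right (by linarith [Real.one_sub_sq_div_two_le_cos (x := t * x)])
          (Real.rpow_nonneg ht.1.le _)
      _ = x ^ 2 / 2 * t ^ (1 - q) := by rw [hsplit]; ring
  case near_infinity =>
    have hdom : IntegrableOn (fun t : ℝ => 2 * t ^ (-1 - q)) (Set.Ioi 1) :=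
      (integrableOn_Ioi_rpow_of_lt (by linarith) one_pos).const_mul 2
    refine hdom.mono' hmeas.aestronglyMeasurable <|
      (ae_restrict_iff' measurableSet_Ioi).2 <| .of_forall fun t ht => ?_
    have ht0 : 0 < t := one_pos.trans ht
    rw [hnorm t ht0]
    exact mul_le_mul_of_nonneg_right (by linarith [Real.neg_one_le_cos (t * x)])
      (Real.rpow_nonneg ht0.le _)

theorem integral_one_sub_cos_mul_rpow_pos {q : ℝ} (hq₀ : 0 < q) (hq₂ : q < 2) :
    0 < ∫ t in Set.Ioi (0 : ℝ), (1 - Real.cos t) * t ^ (-1 - q) := by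
  rw [setIntegral_pos_iff_support_of_nonneg_ae]
  · refine lt_of_lt_of_le (b := volume (Set.Ioo (0 : ℝ) 1)) (by simp) (measure_mono fun t ht => ?_)
    have hcos : Real.cos t < 1 := by
      rw [← Real.cos_zero]
      exact Real.cos_lt_cos_of_nonneg_of_le_pi le_rfl (by linarith [Real.pi_gt_three, ht.2]) ht.1
    exact ⟨(mul_pos (sub_pos.2 hcos) (Real.rpow_pos_of_pos ht.1 _)).ne', ht.1⟩
  · exact (ae_restrict_iff' measurableSet_Ioi).2 <| .of_forall fun t ht =>
      mul_nonneg (sub_nonneg.2 (Real.cos_le_one t)) (Real.rpow_nonneg (le_of_lt ht) _)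
  · simpa only [mul_one] using integrableOn_one_sub_cos_mul_rpow hq₀ hq₂ 1

theorem integral_one_sub_cos_mul_rpow {q : ℝ} (hq : q ≠ 0) (x : ℝ) :
    ∫ t in Set.Ioi (0 : ℝ), (1 - Real.cos (t * x)) * t ^ (-1 - q)
      = |x| ^ q * ∫ t in Set.Ioi (0 : ℝ), (1 - Real.cos t) * t ^ (-1 - q) := by
  rcases eq_or_ne x 0 with rfl | hx
  · simp [Real.zero_rpow hq]
  have hx' : 0 < |x| := abs_pos.2 hx
  have hpow : |x| ^ q * (|x| * |x| ^ (-1 - q)) = 1 := by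
    rw [← Real.rpow_one_add' hx'.le (by simpa [← add_sub_assoc] using hq), ← Real.rpow_add hx']
    simp [← add_sub_assoc]
  have hsubst : ∀ t ∈ Set.Ioi (0 : ℝ), (1 - Real.cos (t * x)) * t ^ (-1 - q)
      = |x| ^ q * |x| * ((1 - Real.cos (|x| * t)) * (|x| * t) ^ (-1 - q)) := fun t ht => by
    have hcos : Real.cos (t * x) = Real.cos (|x| * t) := by
      rw [← Real.cos_abs, abs_mul, abs_of_pos (Set.mem_Ioi.1 ht), mul_comm]
    rw [hcos, Real.mul_rpow hx'.le (le_of_lt ht)]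
    linear_combination -(1 - Real.cos (|x| * t)) * t ^ (-1 - q) * hpow
  rw [setIntegral_congr_fun measurableSet_Ioi hsubst, integral_const_mul,
    integral_comp_mul_left_Ioi (fun t => (1 - Real.cos t) * t ^ (-1 - q)) 0 hx', mul_zero,
    smul_eq_mul, mul_assoc, mul_inv_cancel_left₀ hx'.ne']

theorem posSemidef_parallelogramDefect_one_sub_cos (t : ℝ) :
    (parallelogramDefect fun x : ℝ => 1 - Real.cos (t * x)).PosSemidef := by
  convert (posSemidef_vecMulVec_self fun x : ℝ => 1 - Real.cos (t * x)).smul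
    (zero_le_two : (0 : ℝ) ≤ 2) using 1
  ext s d
  simp only [parallelogramDefect, Matrix.of_apply, Matrix.smul_apply, Matrix.vecMulVec_apply,
    smul_eq_mul, mul_add, mul_sub, Real.cos_add, Real.cos_sub]
  ring

/-- For `q < 2`, `|x| ^ q` is a positive mixture of the functions `1 - cos (t * x)`. -/
theorem posSemidef_parallelogramDefect_abs_rpow {q : ℝ} (hq₀ : 0 < q) (hq₂ : q ≤ 2) :
    (parallelogramDefect fun x : ℝ => |x| ^ q).PosSemidef := by
  rcases hq₂.eq_or_lt with rfl | hq₂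
  · convert Matrix.PosSemidef.zero
    ext s d
    simp only [parallelogramDefect, Real.rpow_two, sq_abs, Matrix.of_apply, Matrix.zero_apply]
    ring
  set c := ∫ t in Set.Ioi (0 : ℝ), (1 - Real.cos t) * t ^ (-1 - q)
  have hc : 0 < c := integral_one_sub_cos_mul_rpow_pos hq₀ hq₂
  have hmix : (fun x : ℝ => |x| ^ q)
      = fun x => c⁻¹ * ∫ t in Set.Ioi (0 : ℝ), (1 - Real.cos (t * x)) * t ^ (-1 - q) := by
    ext x
    rw [integral_one_sub_cos_mul_rpow hq₀.ne', mul_left_comm, inv_mul_cancel₀ hc.ne', mul_one]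
  rw [hmix, parallelogramDefect_const_mul]
  refine (posSemidef_parallelogramDefect_integral ((ae_restrict_iff' measurableSet_Ioi).2 <|
    .of_forall fun t ht => ?_) (integrableOn_one_sub_cos_mul_rpow hq₀ hq₂)).smul
      (inv_nonneg.2 hc.le)
  simp only [mul_comm _ (t ^ (-1 - q)), parallelogramDefect_const_mul]
  exact (posSemidef_parallelogramDefect_one_sub_cos t).smul (Real.rpow_nonneg (le_of_lt ht) _)

theorem isStablePotential_abs_rpow {q : ℝ} (hq₀ : 0 < q) (hq₂ : q ≤ 2) :
    IsStablePotential q fun x : ℝ => |x| ^ q where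
  posSemidef_defect := posSemidef_parallelogramDefect_abs_rpow hq₀ hq₂
  map_add_self x := by
    rw [← two_mul, abs_mul, abs_two, Real.mul_rpow zero_le_two (abs_nonneg x)]

end StablePotential

section Comparison

variable {A B : Type*} [AddCommGroup A] [AddCommGroup B]

theorem sum_diff_injective [IsAddTorsionFree B] {ι : A →+ B} (hι : Function.Injective ι) :
    Function.Injective fun p : A × B => (ι p.1 + p.2, p.2 - ι p.1) := by
  rintro ⟨a, b⟩ ⟨a', b'⟩ h
  obtain ⟨hsum, hdiff⟩ := Prod.mk.inj h
  have hb : b = b' := nsmul_right_injective two_ne_zero <| calc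
    2 • b = ι a + b + (b - ι a) := by rw [two_nsmul]; abel
    _ = ι a' + b' + (b' - ι a') := by rw [hsum, hdiff]
    _ = 2 • b' := by rw [two_nsmul]; abel
  subst hb
  exact Prod.ext (hι (add_right_cancel hsum)) rfl

/-- Pairs `(s, d) = (ι a + b, b - ι a)` are exactly those congruent modulo `2 ι(A)`, and
congruence is itself a positive semidefinite kernel. -/
theorem tsum_sum_diff_nonneg [IsAddTorsionFree B] {M : Matrix B B ℝ} (hM : M.PosSemidef)
    {ι : A →+ B} (hι : Function.Injective ι) :
    0 ≤ ∑' p : A × B, M (ι p.1 + p.2) (p.2 - ι p.1) := by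
  classical
  let S : AddSubgroup B := (ι + ι).range
  let K : Matrix B B ℝ :=
    Matrix.hadamard ((1 : Matrix (B ⧸ S) (B ⧸ S) ℝ).submatrix (↑) (↑)) M
  have hK : K.PosSemidef := (Matrix.PosSemidef.one.submatrix _).hadamard hM
  have hK_apply : ∀ s d, K s d = if (s : B ⧸ S) = d then M s d else 0 := fun s d => by
    simp [K, Matrix.one_apply]
  have hcongr : ∀ p : A × B, ((ι p.1 + p.2 : B) : B ⧸ S) = (p.2 - ι p.1 : B) := fun p =>
    QuotientAddGroup.eq.2 ⟨-p.1, by simp; abel⟩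
  have hsupp : Function.support (fun p : B × B => K p.1 p.2)
      ⊆ Set.range fun p : A × B => (ι p.1 + p.2, p.2 - ι p.1) := by
    rintro ⟨s, d⟩ hsd
    have hmk : (s : B ⧸ S) = d := by
      by_contra hne
      exact hsd ((hK_apply s d).trans (if_neg hne))
    obtain ⟨a, ha⟩ := QuotientAddGroup.eq.1 hmk
    have hd : d = s + (ι a + ι a) := by rw [← AddMonoidHom.add_apply, ha]; abel
    exact ⟨(-a, s + ι a), Prod.ext (by simp) (by simp only [hd, map_neg]; abel)⟩
  calc 0 ≤ ∑' p : B × B, K p.1 p.2 := tsum_nonneg_of_posSemidef hK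
    _ = ∑' p : A × B, K (ι p.1 + p.2) (p.2 - ι p.1) :=
      ((sum_diff_injective hι).tsum_eq hsupp).symm
    _ = ∑' p : A × B, M (ι p.1 + p.2) (p.2 - ι p.1) := tsum_congr fun p =>
      (hK_apply _ _).trans (if_pos (hcongr p))

variable {q : ℝ} {W : B → ℝ}

theorem exp_mul_exp_eq_exp_parallelogramDefect (hW : IsStablePotential q W) (x b : B) :
    Real.exp (-W x) * Real.exp (-W b)
      = Real.exp (-(2 * 2 ^ (-q) * W (x + b))) * Real.exp (-(2 * 2 ^ (-q) * W (b - x)))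
        * Real.exp ((2 ^ (-q) : ℝ) * parallelogramDefect W (x + b) (b - x)) := by
  have hsum : W (x + b + (b - x)) = 2 ^ q * W b := by rw [← hW.map_add_self]; congr 1; abel
  have hdiff : W (x + b - (b - x)) = 2 ^ q * W x := by rw [← hW.map_add_self]; congr 1; abel
  have hpow : (2 : ℝ) ^ (-q) * 2 ^ q = 1 := by rw [← Real.rpow_add two_pos]; simp
  rw [← Real.exp_add, ← Real.exp_add, ← Real.exp_add, parallelogramDefect, Matrix.of_apply, hsum,
    hdiff]
  congr 1
  linear_combination (W x + W b) * hpow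

theorem tsum_exp_mul_exp_mul_sq_sub_sq_nonneg [IsAddTorsionFree B] (hW : IsStablePotential q W)
    (L : B →+ ℝ) {ι : A →+ B} (hι : Function.Injective ι) :
    0 ≤ ∑' p : A × B,
      Real.exp (-W (ι p.1)) * Real.exp (-W p.2) * (L p.2 ^ 2 - L (ι p.1) ^ 2) := by
  let f : B → ℝ := fun s => Real.exp (-(2 * 2 ^ (-q) * W s)) * L s
  have hM : (Matrix.hadamard (Matrix.vecMulVec f f)
      (((2 ^ (-q) : ℝ) • parallelogramDefect W).map Real.exp)).PosSemidef :=
    (posSemidef_vecMulVec_self f).hadamard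
      (posSemidef_map_exp (hW.posSemidef_defect.smul (by positivity)))
  refine (tsum_sum_diff_nonneg hM hι).trans_eq (tsum_congr fun p => ?_)
  rw [exp_mul_exp_eq_exp_parallelogramDefect hW]
  simp only [f, Matrix.hadamard_apply, Matrix.vecMulVec_apply, Matrix.map_apply,
    Matrix.smul_apply, smul_eq_mul, map_add, map_sub]
  ring

theorem tsum_comp_mul_tsum_le [IsAddTorsionFree B] (hW : IsStablePotential q W) (L : B →+ ℝ)
    {ι : A →+ B} (hι : Function.Injective ι) (h₀ : Summable fun b => Real.exp (-W b))
    (h₂ : Summable fun b => Real.exp (-W b) * L b ^ 2) :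
    (∑' a, Real.exp (-W (ι a)) * L (ι a) ^ 2) * ∑' b, Real.exp (-W b)
      ≤ (∑' a, Real.exp (-W (ι a))) * ∑' b, Real.exp (-W b) * L b ^ 2 := by
  have hι₀ : Summable fun a => Real.exp (-W (ι a)) := h₀.comp_injective hι
  have hι₂ : Summable fun a => Real.exp (-W (ι a)) * L (ι a) ^ 2 := h₂.comp_injective hι
  rw [tsum_mul_tsum_of_summable_norm hι₂.norm h₀.norm,
    tsum_mul_tsum_of_summable_norm hι₀.norm h₂.norm, ← sub_nonneg,
    ← (summable_mul_of_summable_norm hι₀.norm h₂.norm).tsum_sub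
      (summable_mul_of_summable_norm hι₂.norm h₀.norm)]
  refine (tsum_exp_mul_exp_mul_sq_sub_sq_nonneg hW L hι).trans_eq (tsum_congr fun p => ?_)
  ring

end Comparison

section StretchedExponential

theorem rpow_mul_exp_neg_le {t s c : ℝ} (ht : 0 ≤ t) (hs : 0 < s) (hc : 0 < c) :
    t ^ s * Real.exp (-(c * t)) ≤ (s / c) ^ s := by
  have hbase : c * t / s ≤ Real.exp (c * t / s) :=
    (lt_add_one _).le.trans (Real.add_one_le_exp _)
  calc t ^ s * Real.exp (-(c * t))
      = (s / c) ^ s * ((c * t / s) ^ s * Real.exp (-(c * t))) := by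
        rw [← mul_assoc, ← Real.mul_rpow (by positivity) (by positivity)]
        congr 2
        field_simp
    _ ≤ (s / c) ^ s * (Real.exp (c * t / s) ^ s * Real.exp (-(c * t))) := by gcongr
    _ = (s / c) ^ s := by
        rw [← Real.exp_mul, ← Real.exp_add, div_mul_cancel₀ _ hs.ne', add_neg_cancel,
          Real.exp_zero, mul_one]

variable {q J : ℝ}

theorem sq_mul_exp_neg_abs_rpow_le (hq : 0 < q) (hJ : 0 < J) (x : ℝ) :
    x ^ 2 * Real.exp (-(J * |x| ^ q)) ≤ (2 / q / J) ^ (2 / q) := by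
  have hsq : x ^ 2 = (|x| ^ q) ^ (2 / q) := by
    rw [← Real.rpow_mul (abs_nonneg x), mul_div_cancel₀ _ hq.ne', Real.rpow_two, sq_abs]
  rw [hsq]
  exact rpow_mul_exp_neg_le (by positivity) (by positivity) hJ

theorem summable_exp_neg_abs_rpow (hq : 0 < q) (hJ : 0 < J) :
    Summable fun x : ℤ => Real.exp (-(J * |(x : ℝ)| ^ q)) := by
  have hdom : Summable fun x : ℤ => (2 / q / J) ^ (2 / q) * |(x : ℝ)| ^ (-2 : ℝ) :=
    (Real.summable_abs_int_rpow one_lt_two).mul_left _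
  refine hdom.of_norm_bounded_eventually ?_
  filter_upwards [eventually_cofinite_ne (0 : ℤ)] with x hx
  have hx2 : (0 : ℝ) < (x : ℝ) ^ 2 := by positivity
  rw [Real.norm_of_nonneg (Real.exp_pos _).le, Real.rpow_neg (abs_nonneg _), Real.rpow_two, sq_abs,
    ← div_eq_mul_inv, le_div_iff₀ hx2, mul_comm]
  exact sq_mul_exp_neg_abs_rpow_le hq hJ x

theorem mul_abs_le_abs_mul_add (y : ℤ) {m r : ℕ} (hr : r < m) :
    m * |y| ≤ |y * m + r| ∨ m * |y + 1| ≤ |y * m + r| := by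
  rcases le_or_gt 0 y with hy | hy
  · left
    rw [abs_of_nonneg hy, abs_of_nonneg (by positivity)]
    linarith [mul_comm (m : ℤ) y]
  · right
    have hle : y * m + r ≤ 0 := by
      have : (r : ℤ) ≤ m := by exact_mod_cast hr.le
      nlinarith
    rw [abs_of_nonpos (show y + 1 ≤ 0 by omega), abs_of_nonpos hle]
    linarith [mul_comm (m : ℤ) y]

theorem tsum_abs_le_two_mul_tsum_mul_abs {g : ℝ → ℝ} (hg : AntitoneOn g (Set.Ici 0))
    (hg₀ : ∀ t, 0 ≤ g t) (m : ℕ) [NeZero m] (hs : Summable fun y : ℤ => g (m * |(y : ℝ)|)) :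
    ∑' x : ℤ, g |(x : ℝ)| ≤ 2 * m * ∑' y : ℤ, g (m * |(y : ℝ)|) := by
  set h : ℤ → ℝ := fun y => g (m * |(y : ℝ)|)
  have hs' : Summable fun y => h (y + 1) := hs.comp_injective (add_left_injective 1)
  have hanti : ∀ x y : ℤ, m * |y| ≤ |x| → g |(x : ℝ)| ≤ h y := fun x y hxy =>
    hg (Set.mem_Ici.2 (by positivity)) (Set.mem_Ici.2 (by positivity)) (by exact_mod_cast hxy)
  have hle : ∀ p : ℤ × Fin m,
      g |(((Int.divModEquiv m).symm p : ℤ) : ℝ)| ≤ h p.1 + h (p.1 + 1) := fun p =>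
    (mul_abs_le_abs_mul_add p.1 p.2.2).elim
      (fun hp => (hanti _ _ hp).trans (le_add_of_nonneg_right (hg₀ _)))
      (fun hp => (hanti _ _ hp).trans (le_add_of_nonneg_left (hg₀ _)))
  have hsum : Summable fun p : ℤ × Fin m => h p.1 + h (p.1 + 1) := by
    simpa using (hs.add hs').mul_of_nonneg (Summable.of_finite (f := fun _ : Fin m => (1 : ℝ)))
      (fun y => add_nonneg (hg₀ _) (hg₀ _)) fun _ => zero_le_one
  calc ∑' x : ℤ, g |(x : ℝ)|
      = ∑' p : ℤ × Fin m, g |(((Int.divModEquiv m).symm p : ℤ) : ℝ)| :=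
        ((Int.divModEquiv m).symm.tsum_eq fun x : ℤ => g |(x : ℝ)|).symm
    _ ≤ ∑' p : ℤ × Fin m, (h p.1 + h (p.1 + 1)) :=
      (hsum.of_nonneg_of_le (fun _ => hg₀ _) hle).tsum_le_tsum hle hsum
    _ = ∑' y : ℤ, m * (h y + h (y + 1)) := by simp [hsum.tsum_prod, mul_add]
    _ = m * (∑' y, h y + ∑' y, h (y + 1)) := by rw [tsum_mul_left, hs.tsum_add hs']
    _ = 2 * m * ∑' y, h y := by
      rw [show ∑' y, h (y + 1) = ∑' y, h y from (Equiv.addRight (1 : ℤ)).tsum_eq h]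
      ring

theorem tsum_exp_neg_half_abs_rpow_le (hq : 0 < q) (hJ : 0 < J) :
    ∑' x : ℤ, Real.exp (-(J / 2 * |(x : ℝ)| ^ q))
      ≤ 2 * ⌈(2 : ℝ) ^ (1 / q)⌉₊ * ∑' x : ℤ, Real.exp (-(J * |(x : ℝ)| ^ q)) := by
  set m := ⌈(2 : ℝ) ^ (1 / q)⌉₊
  have : NeZero m := ⟨(Nat.ceil_pos.2 (by positivity)).ne'⟩
  have hm : (2 : ℝ) ≤ (m : ℝ) ^ q := by
    calc (2 : ℝ) = ((2 : ℝ) ^ (1 / q)) ^ q := by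
          rw [← Real.rpow_mul zero_le_two, one_div_mul_cancel hq.ne', Real.rpow_one]
      _ ≤ (m : ℝ) ^ q := by gcongr; exact Nat.le_ceil _
  have hle : ∀ y : ℤ, Real.exp (-(J / 2 * (m * |(y : ℝ)|) ^ q)) ≤ Real.exp (-(J * |(y : ℝ)| ^ q)) :=
    fun y => by
      rw [Real.mul_rpow (by positivity) (by positivity), Real.exp_le_exp, neg_le_neg_iff]
      nlinarith [mul_nonneg hJ.le (Real.rpow_nonneg (abs_nonneg (y : ℝ)) q)]
  have hs := summable_exp_neg_abs_rpow hq hJ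
  have hs' := hs.of_nonneg_of_le (fun _ => (Real.exp_pos _).le) hle
  have hanti : AntitoneOn (fun t : ℝ => Real.exp (-(J / 2 * t ^ q))) (Set.Ici 0) :=
    fun s hs t _ hst => by
      have := Set.mem_Ici.1 hs
      dsimp only
      gcongr
  calc _ ≤ 2 * m * ∑' y : ℤ, Real.exp (-(J / 2 * (m * |(y : ℝ)|) ^ q)) :=
        tsum_abs_le_two_mul_tsum_mul_abs hanti (fun _ => (Real.exp_pos _).le) m hs'
    _ ≤ _ := mul_le_mul_of_nonneg_left (hs'.tsum_le_tsum hle hs) (by positivity)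

/-- A constant `c` such that the one-site measure on `ℤ` with weights `exp (-J |x| ^ q)` has second
moment at most `c * J ^ (-2 / q)`, uniformly in `J > 0`. -/
noncomputable def stretchedExpConst (q : ℝ) : ℝ :=
  2 * ⌈(2 : ℝ) ^ (1 / q)⌉₊ * (4 / q) ^ (2 / q)

theorem stretchedExpConst_nonneg (hq : 0 < q) : 0 ≤ stretchedExpConst q := by
  unfold stretchedExpConst
  positivity

theorem sq_mul_exp_neg_abs_rpow_le_half (hq : 0 < q) (hJ : 0 < J) (x : ℝ) :
    x ^ 2 * Real.exp (-(J * |x| ^ q))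
      ≤ (4 / q) ^ (2 / q) * J ^ (-2 / q) * Real.exp (-(J / 2 * |x| ^ q)) := by
  have hsplit : Real.exp (-(J * |x| ^ q))
      = Real.exp (-(J / 2 * |x| ^ q)) * Real.exp (-(J / 2 * |x| ^ q)) := by
    rw [← Real.exp_add]
    ring_nf
  have hconst : (2 / q / (J / 2)) ^ (2 / q) = (4 / q) ^ (2 / q) * J ^ (-2 / q) := by
    rw [neg_div, Real.rpow_neg hJ.le, ← div_eq_mul_inv, ← Real.div_rpow (by positivity) hJ.le]
    congr 1
    field_simp
    norm_num
  rw [hsplit, ← mul_assoc, ← hconst]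
  exact mul_le_mul_of_nonneg_right (sq_mul_exp_neg_abs_rpow_le hq (half_pos hJ) x)
    (Real.exp_pos _).le

theorem summable_sq_mul_exp_neg_abs_rpow (hq : 0 < q) (hJ : 0 < J) :
    Summable fun x : ℤ => (x : ℝ) ^ 2 * Real.exp (-(J * |(x : ℝ)| ^ q)) :=
  ((summable_exp_neg_abs_rpow hq (half_pos hJ)).mul_left _).of_nonneg_of_le
    (fun _ => by positivity) fun x => sq_mul_exp_neg_abs_rpow_le_half hq hJ x

theorem tsum_sq_mul_exp_neg_abs_rpow_le (hq : 0 < q) (hJ : 0 < J) :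
    ∑' x : ℤ, (x : ℝ) ^ 2 * Real.exp (-(J * |(x : ℝ)| ^ q))
      ≤ stretchedExpConst q * J ^ (-2 / q) * ∑' x : ℤ, Real.exp (-(J * |(x : ℝ)| ^ q)) := by
  calc _ ≤ ∑' x : ℤ,
          (4 / q) ^ (2 / q) * J ^ (-2 / q) * Real.exp (-(J / 2 * |(x : ℝ)| ^ q)) :=
        (summable_sq_mul_exp_neg_abs_rpow hq hJ).tsum_le_tsum
          (fun x => sq_mul_exp_neg_abs_rpow_le_half hq hJ x)
          ((summable_exp_neg_abs_rpow hq (half_pos hJ)).mul_left _)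
    _ = (4 / q) ^ (2 / q) * J ^ (-2 / q) * ∑' x : ℤ, Real.exp (-(J / 2 * |(x : ℝ)| ^ q)) :=
        tsum_mul_left
    _ ≤ (4 / q) ^ (2 / q) * J ^ (-2 / q)
          * (2 * ⌈(2 : ℝ) ^ (1 / q)⌉₊ * ∑' x : ℤ, Real.exp (-(J * |(x : ℝ)| ^ q))) := by
        gcongr
        exact tsum_exp_neg_half_abs_rpow_le hq hJ
    _ = _ := by rw [stretchedExpConst]; ring

end StretchedExponential

section ProductWeights

theorem hasSum_mul_prod {X Y : Type*} {f : X → ℝ} {g : Y → ℝ} {a b : ℝ} (hf : HasSum f a)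
    (hg : HasSum g b) : HasSum (fun p : X × Y => f p.1 * g p.2) (a * b) :=
  hf.mul hg (summable_mul_of_summable_norm hf.summable.norm hg.summable.norm)

theorem hasSum_prod_fin_pi {X : Type*} {n : ℕ} {f : Fin n → X → ℝ} (hf : ∀ i, Summable (f i)) :
    HasSum (fun x : Fin n → X => ∏ i, f i (x i)) (∏ i, ∑' a, f i a) := by
  induction n with
  | zero => simp
  | succ n ih =>
    have hmul := hasSum_mul_prod (hf 0).hasSum (ih fun i => hf i.succ)
    rw [← (Fin.consEquiv fun _ => X).hasSum_iff]
    simpa only [Function.comp_def, Fin.consEquiv_apply, Fin.prod_univ_succ, Fin.cons_zero,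
      Fin.cons_succ] using hmul

theorem hasSum_prod_pi {E X : Type*} [Fintype E] {f : E → X → ℝ} (hf : ∀ e, Summable (f e)) :
    HasSum (fun x : E → X => ∏ e, f e (x e)) (∏ e, ∑' a, f e a) := by
  let σ := (Fintype.equivFin E).symm
  rw [← (Equiv.arrowCongr σ (Equiv.refl X)).hasSum_iff, ← σ.prod_comp]
  simpa [Function.comp_def, ← σ.prod_comp] using hasSum_prod_fin_pi fun i => hf (σ i)

variable {E : Type*} [Fintype E] {u : E → ℤ → ℝ}

theorem tsum_eq_zero_of_odd {f : ℤ → ℝ} (hf : f.Odd) : ∑' x, f x = 0 := by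
  have hneg : ∑' x, f x = -∑' x, f x := by
    rw [← tsum_neg, ← (Equiv.neg ℤ).tsum_eq f]
    exact tsum_congr hf
  linarith

theorem summable_intCast_mul {u : ℤ → ℝ} (h : Summable fun x : ℤ => (x : ℝ) ^ 2 * u x) :
    Summable fun x : ℤ => (x : ℝ) * u x := by
  refine Summable.of_norm_bounded h.norm fun x => ?_
  rw [norm_mul, norm_mul]
  gcongr
  rw [Real.norm_eq_abs, Real.norm_eq_abs, abs_sq]
  exact_mod_cast Int.natAbs_le_self_sq x

theorem hasSum_prod_mul_coord_mul_coord [DecidableEq E] (hu : ∀ e, (u e).Even)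
    (h₀ : ∀ e, Summable (u e)) (h₂ : ∀ e, Summable fun x : ℤ => (x : ℝ) ^ 2 * u e x) (e e' : E) :
    HasSum (fun y : E → ℤ => (∏ d, u d (y d)) * (y e * y e'))
      (if e = e' then (∑' x : ℤ, (x : ℝ) ^ 2 * u e x) * ∏ d ∈ univ.erase e, ∑' x, u d x
        else 0) := by
  let g : E → ℤ → ℝ := fun d x =>
    (if d = e then (x : ℝ) else 1) * (if d = e' then (x : ℝ) else 1) * u d x
  have hg : ∀ d, Summable (g d) := fun d => by
    by_cases hde : d = e <;> by_cases hde' : d = e'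
    · simpa only [g, if_pos hde, if_pos hde', ← sq] using h₂ d
    · simpa only [g, if_pos hde, if_neg hde', mul_one] using summable_intCast_mul (h₂ d)
    · simpa only [g, if_neg hde, if_pos hde', one_mul] using summable_intCast_mul (h₂ d)
    · simpa only [g, if_neg hde, if_neg hde', one_mul] using h₀ d
  convert hasSum_prod_pi hg using 1
  · ext y
    simp only [g, prod_mul_distrib, prod_ite_eq', mem_univ, if_true]
    ring
  · split_ifs with hee
    · subst hee
      rw [← mul_prod_erase univ _ (mem_univ e)]
      congr 1
      · simp [g, sq]
      · refine prod_congr rfl fun d hd => ?_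
        simp [g, ne_of_mem_erase hd]
    · refine (prod_eq_zero (mem_univ e) (tsum_eq_zero_of_odd fun x => ?_)).symm
      simp [g, hee, hu e x]

theorem hasSum_prod_mul_linear_sq [DecidableEq E] (hu : ∀ e, (u e).Even)
    (h₀ : ∀ e, Summable (u e)) (h₂ : ∀ e, Summable fun x : ℤ => (x : ℝ) ^ 2 * u e x)
    (θ : E → ℝ) :
    HasSum (fun y : E → ℤ => (∏ d, u d (y d)) * (∑ e, θ e * y e) ^ 2)
      (∑ e, θ e ^ 2 * ((∑' x : ℤ, (x : ℝ) ^ 2 * u e x) * ∏ d ∈ univ.erase e, ∑' x, u d x)) := by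
  have hexpand : (fun y : E → ℤ => (∏ d, u d (y d)) * (∑ e, θ e * (y e : ℝ)) ^ 2)
      = fun y => ∑ e, ∑ e', θ e * θ e' * ((∏ d, u d (y d)) * (y e * y e')) := by
    ext y
    rw [sq, sum_mul_sum, mul_sum]
    refine sum_congr rfl fun e _ => ?_
    rw [mul_sum]
    exact sum_congr rfl fun e' _ => by ring
  rw [hexpand]
  simpa [sq] using hasSum_sum fun e (_ : e ∈ univ) => hasSum_sum fun e' (_ : e' ∈ univ) =>
    (hasSum_prod_mul_coord_mul_coord hu h₀ h₂ e e').mul_left (θ e * θ e')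

theorem tsum_prod_mul_linear_sq_le (hu : ∀ e, (u e).Even) (hu₀ : ∀ e x, 0 ≤ u e x)
    (h₀ : ∀ e, Summable (u e)) (h₂ : ∀ e, Summable fun x : ℤ => (x : ℝ) ^ 2 * u e x)
    {v : E → ℝ} (hv : ∀ e, ∑' x : ℤ, (x : ℝ) ^ 2 * u e x ≤ v e * ∑' x, u e x) (θ : E → ℝ) :
    ∑' y : E → ℤ, (∏ d, u d (y d)) * (∑ e, θ e * y e) ^ 2
      ≤ (∑ e, θ e ^ 2 * v e) * ∑' y : E → ℤ, ∏ d, u d (y d) := by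
  classical
  rw [(hasSum_prod_mul_linear_sq hu h₀ h₂ θ).tsum_eq, (hasSum_prod_pi h₀).tsum_eq, sum_mul]
  refine sum_le_sum fun e _ => ?_
  rw [← mul_prod_erase univ _ (mem_univ e), mul_assoc, ← mul_assoc (v e)]
  refine mul_le_mul_of_nonneg_left (mul_le_mul_of_nonneg_right (hv e) ?_) (sq_nonneg _)
  exact prod_nonneg fun d _ => tsum_nonneg (hu₀ d)

end ProductWeights

section DecoupledEdges

variable {G E : Type*} [Fintype E] {q : ℝ} {U : G → ℝ} {J : E → ℝ}

/-- The energy of a pair `(a, y)`, where the variables `y e ∈ ℤ` on the edges `e` are independent of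
`a` and of each other. Restricting it to gradients `y e = D e a` of elements `a` recovers
`U a + ∑ e, J e * |D e a| ^ q`. -/
noncomputable def decoupledEnergy (q : ℝ) (U : G → ℝ) (J : E → ℝ) (b : G × (E → ℤ)) : ℝ :=
  U b.1 + ∑ e, J e * |(b.2 e : ℝ)| ^ q

theorem exp_neg_decoupledEnergy (b : G × (E → ℤ)) :
    Real.exp (-decoupledEnergy q U J b)
      = Real.exp (-U b.1) * ∏ e, Real.exp (-(J e * |(b.2 e : ℝ)| ^ q)) := by
  rw [decoupledEnergy, neg_add, Real.exp_add, ← sum_neg_distrib, Real.exp_sum]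

theorem hasSum_exp_neg_decoupledEnergy (hq : 0 < q) (hJ : ∀ e, 0 < J e)
    (hU : Summable fun a => Real.exp (-U a)) :
    HasSum (fun b => Real.exp (-decoupledEnergy q U J b))
      ((∑' a, Real.exp (-U a))
        * ∑' y : E → ℤ, ∏ e, Real.exp (-(J e * |(y e : ℝ)| ^ q))) := by
  simpa only [exp_neg_decoupledEnergy] using hasSum_mul_prod hU.hasSum
    (hasSum_prod_pi fun e => summable_exp_neg_abs_rpow hq (hJ e)).summable.hasSum

theorem hasSum_exp_neg_decoupledEnergy_mul_sq (hq : 0 < q) (hJ : ∀ e, 0 < J e)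
    (hU : Summable fun a => Real.exp (-U a)) (θ : E → ℝ) :
    HasSum (fun b => Real.exp (-decoupledEnergy q U J b) * (∑ e, θ e * b.2 e) ^ 2)
      ((∑' a, Real.exp (-U a))
        * ∑' y : E → ℤ, (∏ e, Real.exp (-(J e * |(y e : ℝ)| ^ q))) * (∑ e, θ e * y e) ^ 2) := by
  classical
  have heven : ∀ e, (fun x : ℤ => Real.exp (-(J e * |(x : ℝ)| ^ q))).Even := fun e x => by simp
  simpa only [exp_neg_decoupledEnergy, mul_assoc] using hasSum_mul_prod hU.hasSum
    (hasSum_prod_mul_linear_sq heven (fun e => summable_exp_neg_abs_rpow hq (hJ e))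
      (fun e => summable_sq_mul_exp_neg_abs_rpow hq (hJ e)) θ).summable.hasSum

theorem tsum_exp_neg_decoupledEnergy_mul_sq_le (hq : 0 < q) (hJ : ∀ e, 0 < J e)
    (hU : Summable fun a => Real.exp (-U a)) (θ : E → ℝ) :
    ∑' b, Real.exp (-decoupledEnergy q U J b) * (∑ e, θ e * b.2 e) ^ 2
      ≤ (∑ e, θ e ^ 2 * (stretchedExpConst q * J e ^ (-2 / q)))
        * ∑' b, Real.exp (-decoupledEnergy q U J b) := by
  rw [(hasSum_exp_neg_decoupledEnergy hq hJ hU).tsum_eq,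
    (hasSum_exp_neg_decoupledEnergy_mul_sq hq hJ hU θ).tsum_eq, mul_left_comm]
  exact mul_le_mul_of_nonneg_left
    (tsum_prod_mul_linear_sq_le (fun e x => by simp) (fun _ _ => (Real.exp_pos _).le)
      (fun e => summable_exp_neg_abs_rpow hq (hJ e))
      (fun e => summable_sq_mul_exp_neg_abs_rpow hq (hJ e))
      (fun e => tsum_sq_mul_exp_neg_abs_rpow_le hq (hJ e)) θ)
    (tsum_nonneg fun _ => (Real.exp_pos _).le)

variable [AddCommGroup G]

theorem IsStablePotential.decoupledEnergy (hU : IsStablePotential q U) (hq₀ : 0 < q) (hq₂ : q ≤ 2)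
    (hJ : ∀ e, 0 < J e) : IsStablePotential q (decoupledEnergy q U J) := by
  let coord (e : E) : G × (E → ℤ) →+ ℝ :=
    (Int.castAddHom ℝ).comp ((Pi.evalAddMonoidHom (fun _ => ℤ) e).comp (AddMonoidHom.snd G _))
  exact (hU.comp (AddMonoidHom.fst G (E → ℤ))).add <| .hasSum
    (fun e => ((isStablePotential_abs_rpow hq₀ hq₂).comp (coord e)).const_mul (hJ e).le)
    fun b => hasSum_fintype _

theorem tsum_exp_neg_mul_linear_sq_le [IsAddTorsionFree G] (hq₀ : 0 < q) (hq₂ : q ≤ 2)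
    (hU : IsStablePotential q U) (hU₀ : Summable fun a => Real.exp (-U a)) (D : E → G →+ ℤ)
    (hJ : ∀ e, 0 < J e) (θ : E → ℝ) :
    ∑' a, Real.exp (-(U a + ∑ e, J e * |(D e a : ℝ)| ^ q)) * (∑ e, θ e * D e a) ^ 2
      ≤ (∑ e, θ e ^ 2 * (stretchedExpConst q * J e ^ (-2 / q)))
        * ∑' a, Real.exp (-(U a + ∑ e, J e * |(D e a : ℝ)| ^ q)) := by
  set κ := ∑ e, θ e ^ 2 * (stretchedExpConst q * J e ^ (-2 / q))
  set W := decoupledEnergy q U J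
  let L : G × (E → ℤ) →+ ℝ :=
    { toFun := fun b => ∑ e, θ e * b.2 e
      map_zero' := by simp
      map_add' := fun b c => by simp [mul_add, sum_add_distrib] }
  let graph : G →+ G × (E → ℤ) := (AddMonoidHom.id G).prod (AddMonoidHom.pi D)
  have hgraph : Function.Injective graph := fun a b h => congrArg Prod.fst h
  have h₀ := (hasSum_exp_neg_decoupledEnergy hq₀ hJ hU₀).summable
  have h₂ := (hasSum_exp_neg_decoupledEnergy_mul_sq hq₀ hJ hU₀ θ).summable
  have hZ : 0 < ∑' b, Real.exp (-W b) :=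
    h₀.tsum_pos (fun _ => (Real.exp_pos _).le) 0 (Real.exp_pos _)
  refine le_of_mul_le_mul_right ?_ hZ
  calc _ ≤ (∑' a, Real.exp (-W (graph a))) * ∑' b, Real.exp (-W b) * L b ^ 2 :=
        tsum_comp_mul_tsum_le (hU.decoupledEnergy hq₀ hq₂ hJ) L hgraph h₀ h₂
    _ ≤ (∑' a, Real.exp (-W (graph a))) * (κ * ∑' b, Real.exp (-W b)) :=
        mul_le_mul_of_nonneg_left (tsum_exp_neg_decoupledEnergy_mul_sq_le hq₀ hJ hU₀ θ)
          (tsum_nonneg fun _ => (Real.exp_pos _).le)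
    _ = _ := by rw [← mul_assoc, mul_comm _ κ]; rfl

end DecoupledEdges

section CountableEdges

variable {G B : Type*} [AddCommGroup G] [IsAddTorsionFree G] {q : ℝ} {J : B → ℝ}

theorem tsum_exp_neg_tsum_mul_linear_sq_le (hq₀ : 0 < q) (hq₂ : q ≤ 2) (D : B → G →+ ℤ)
    (hJ : ∀ b, 0 ≤ J b) (hsum : ∀ a, Summable fun b => J b * |(D b a : ℝ)| ^ q)
    (hhalf : Summable fun a => Real.exp (-((∑' b, J b * |(D b a : ℝ)| ^ q) / 2)))
    {E : Finset B} (hE : ∀ b ∈ E, 0 < J b) (θ : B → ℝ) :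
    ∑' a, Real.exp (-∑' b, J b * |(D b a : ℝ)| ^ q) * (∑ b ∈ E, θ b * D b a) ^ 2
      ≤ (∑ b ∈ E, θ b ^ 2 * (stretchedExpConst q * (J b / 2) ^ (-2 / q)))
        * ∑' a, Real.exp (-∑' b, J b * |(D b a : ℝ)| ^ q) := by
  set H : G → ℝ := fun a => ∑' b, J b * |(D b a : ℝ)| ^ q
  set R : G → ℝ := fun a => ∑' b : ↥((E : Set B)ᶜ), J b * |(D b a : ℝ)| ^ q
  have hbond (b : B) : IsStablePotential q fun a => J b * |(D b a : ℝ)| ^ q :=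
    ((isStablePotential_abs_rpow hq₀ hq₂).comp ((Int.castAddHom ℝ).comp (D b))).const_mul (hJ b)
  have hR₀ (a : G) : 0 ≤ R a := tsum_nonneg fun b => by have := hJ b; positivity
  let U (a : G) : ℝ := 2⁻¹ * H a + 2⁻¹ * R a
  have hU_apply (a : G) : U a = 2⁻¹ * H a + 2⁻¹ * R a := rfl
  have hU : IsStablePotential q U :=
    ((IsStablePotential.hasSum hbond fun a => (hsum a).hasSum).const_mul (by norm_num)).add
      ((IsStablePotential.hasSum (fun b : ↥((E : Set B)ᶜ) => hbond b)
        fun a => ((hsum a).subtype _).hasSum).const_mul (by norm_num))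
  have hU₀ : Summable fun a => Real.exp (-U a) := by
    refine .of_nonneg_of_le (fun _ => (Real.exp_pos _).le) (fun a => ?_) hhalf
    change Real.exp (-U a) ≤ Real.exp (-(H a / 2))
    exact Real.exp_le_exp.2 (by linarith [hR₀ a, hU_apply a])
  have hsplit (a : G) : U a + ∑ b : E, J b / 2 * |(D b a : ℝ)| ^ q = H a := by
    have hfin : ∑ b : E, J b / 2 * |(D b a : ℝ)| ^ q
        = 2⁻¹ * ∑ b ∈ E, J b * |(D b a : ℝ)| ^ q := by
      rw [sum_coe_sort E fun b => J b / 2 * |(D b a : ℝ)| ^ q, mul_sum]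
      exact sum_congr rfl fun b _ => by ring
    have hcompl : ∑ b ∈ E, J b * |(D b a : ℝ)| ^ q + R a = H a := (hsum a).sum_add_tsum_compl
    linarith [hU_apply a]
  have hmain := tsum_exp_neg_mul_linear_sq_le hq₀ hq₂ hU hU₀ (fun b : E => D b)
    (fun b : E => half_pos (hE b b.2)) (fun b => θ b)
  simpa only [hsplit, fun a => sum_coe_sort E fun b => θ b * (D b a : ℝ),
    sum_coe_sort E fun b => θ b ^ 2 * (stretchedExpConst q * (J b / 2) ^ (-2 / q))] using hmain

end CountableEdges

section LongRangeSummability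

variable {q α : ℝ}

theorem abs_sub_rpow_le (hq : 0 ≤ q) (x y : ℝ) : |x - y| ^ q ≤ 2 ^ q * (|x| ^ q + |y| ^ q) := by
  have hmax : |x - y| ≤ 2 * max |x| |y| := by
    linarith [abs_sub x y, le_max_left |x| |y|, le_max_right |x| |y|]
  calc |x - y| ^ q ≤ (2 * max |x| |y|) ^ q := Real.rpow_le_rpow (abs_nonneg _) hmax hq
    _ = 2 ^ q * (max |x| |y|) ^ q := Real.mul_rpow zero_le_two (le_max_of_le_left (abs_nonneg x))
    _ ≤ 2 ^ q * (|x| ^ q + |y| ^ q) := by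
        gcongr
        rcases max_cases |x| |y| with h | h <;> rw [h.1] <;>
          simp only [le_add_iff_nonneg_left, le_add_iff_nonneg_right] <;> positivity

theorem summable_mul_abs_sub_rpow_neg (hα : 1 < α) {u : ℤ → ℝ} (hu : Summable u) :
    Summable fun p : ℤ × ℤ => u p.1 * |((p.1 - p.2 : ℤ) : ℝ)| ^ (-α) := by
  rw [← (Equiv.prodShear (Equiv.refl ℤ) fun i => Equiv.subLeft i).summable_iff]
  exact (hasSum_mul_prod hu.hasSum (Real.summable_abs_int_rpow hα).hasSum).summable.congr
    fun p => by simp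

theorem summable_abs_sub_rpow_neg_mul_abs_sub_rpow (hα : 1 < α) (hq : 0 ≤ q) {u : ℤ → ℝ}
    (hu : Summable fun k => |u k| ^ q) :
    Summable fun p : ℤ × ℤ => |((p.1 - p.2 : ℤ) : ℝ)| ^ (-α) * |u p.1 - u p.2| ^ q := by
  have hfst := summable_mul_abs_sub_rpow_neg hα hu
  have hsnd : Summable fun p : ℤ × ℤ => |u p.2| ^ q * |((p.1 - p.2 : ℤ) : ℝ)| ^ (-α) :=
    ((Equiv.prodComm ℤ ℤ).summable_iff.2 hfst).congr fun p => by
      simp [abs_sub_comm (p.2 : ℝ)]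
  refine .of_nonneg_of_le (fun p => by positivity) (fun p => ?_) ((hfst.add hsnd).mul_left (2 ^ q))
  calc _ ≤ |((p.1 - p.2 : ℤ) : ℝ)| ^ (-α) * (2 ^ q * (|u p.1| ^ q + |u p.2| ^ q)) := by
        gcongr
        exact abs_sub_rpow_le hq _ _
    _ = _ := by ring

end LongRangeSummability

section Chain

variable {N : ℕ} {q α β : ℝ}

/-- `ChainConfig N` as a group under pointwise addition of heights. -/
def chainSubgroup (N : ℕ) : AddSubgroup (ℤ → ℤ) where
  carrier := {φ | ∀ k : ℤ, (N : ℤ) < |k| → φ k = 0}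
  zero_mem' _ _ := rfl
  add_mem' hφ hψ k hk := by simp [hφ k hk, hψ k hk]
  neg_mem' hφ k hk := by simp [hφ k hk]

instance : AddCommGroup (ChainConfig N) := inferInstanceAs (AddCommGroup (chainSubgroup N))

instance : IsAddTorsionFree (ChainConfig N) :=
  inferInstanceAs (IsAddTorsionFree (chainSubgroup N))

/-- The height difference `φ i - φ j` along the bond `(i, j)`. -/
def chainGrad (N : ℕ) (p : ℤ × ℤ) : ChainConfig N →+ ℤ :=
  (Pi.evalAddMonoidHom (fun _ : ℤ => ℤ) p.1 - Pi.evalAddMonoidHom (fun _ : ℤ => ℤ) p.2).comp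
    (chainSubgroup N).subtype

theorem chainGrad_apply (p : ℤ × ℤ) (φ : ChainConfig N) :
    chainGrad N p φ = φ.val p.1 - φ.val p.2 := rfl

/-- The coupling constant `β |i - j|^(-α)` of the bond `(i, j)`. -/
noncomputable def chainCoupling (β α : ℝ) (p : ℤ × ℤ) : ℝ :=
  β * |((p.1 - p.2 : ℤ) : ℝ)| ^ (-α)

theorem chainCoupling_nonneg (hβ : 0 ≤ β) (p : ℤ × ℤ) : 0 ≤ chainCoupling β α p := by
  unfold chainCoupling; positivity

theorem chainCoupling_pos (hβ : 0 < β) {p : ℤ × ℤ} (hp : p.1 ≠ p.2) : 0 < chainCoupling β α p :=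
  mul_pos hβ (Real.rpow_pos_of_pos (abs_pos.2 (Int.cast_ne_zero.2 (sub_ne_zero.2 hp))) _)

theorem chainEnergy_eq_tsum (hq : 0 < q) (φ : ChainConfig N) :
    chainEnergy β α q φ.val = ∑' p, chainCoupling β α p * |(chainGrad N p φ : ℝ)| ^ q := by
  simp only [chainEnergy, chainCoupling, mul_assoc, tsum_mul_left]
  congr 2 with p
  split_ifs with hp
  · simp [chainGrad_apply, hp, Real.zero_rpow hq.ne']
  · rw [chainGrad_apply, Real.rpow_neg (abs_nonneg _), div_eq_inv_mul]

theorem summable_chainCoupling_mul (hα : 1 < α) (hq : 0 < q) (φ : ChainConfig N) :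
    Summable fun p => chainCoupling β α p * |(chainGrad N p φ : ℝ)| ^ q := by
  have hφ : Summable fun k => |(φ.val k : ℝ)| ^ q :=
    summable_of_ne_finset_zero (s := Icc (-(N : ℤ)) N) fun k hk => by
      rw [φ.2 k (by rwa [mem_Icc, ← abs_le, not_le] at hk)]
      simp [hq.ne']
  simpa only [chainCoupling, chainGrad_apply, mul_assoc, Int.cast_sub] using
    (summable_abs_sub_rpow_neg_mul_abs_sub_rpow hα hq.le hφ).mul_left β

theorem rpow_neg_le_chainCoupling (hα : 0 ≤ α) (hβ : 0 ≤ β) {i : ℤ} (hi : i ∈ Icc (-(N : ℤ)) N) :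
    β * (2 * N + 1 : ℝ) ^ (-α) ≤ chainCoupling β α (i, N + 1) := by
  rw [mem_Icc] at hi
  have hdist : |((i - (N + 1) : ℤ) : ℝ)| = ((N + 1 - i : ℤ) : ℝ) := by
    rw [← Int.cast_abs, abs_of_neg (by lia)]
    congr 1
    ring
  rw [chainCoupling, hdist]
  refine mul_le_mul_of_nonneg_left (Real.rpow_le_rpow_of_nonpos ?_ ?_ (neg_nonpos.2 hα)) hβ
  · exact_mod_cast (by lia : 0 < (N : ℤ) + 1 - i)
  · exact_mod_cast (by lia : (N : ℤ) + 1 - i ≤ 2 * N + 1)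

/-- The heights are pinned by the bonds to the site `N + 1`, of length at most `2 N + 1`. -/
theorem sum_abs_rpow_le_chainEnergy (hα : 1 < α) (hq : 0 < q) (hβ : 0 ≤ β) (φ : ChainConfig N) :
    ∑ i ∈ Icc (-(N : ℤ)) N, β * (2 * N + 1 : ℝ) ^ (-α) * |(φ.val i : ℝ)| ^ q
      ≤ chainEnergy β α q φ.val := by
  let pin : ℤ ↪ ℤ × ℤ := ⟨fun i => (i, N + 1), fun i j h => congrArg Prod.fst h⟩
  have hgrad (i : ℤ) : chainGrad N (pin i) φ = φ.val i := by
    have hout : φ.val (N + 1) = 0 := φ.2 _ (by rw [abs_of_nonneg] <;> lia)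
    change φ.val i - φ.val (N + 1) = φ.val i
    rw [hout, sub_zero]
  calc _ ≤ ∑ i ∈ Icc (-(N : ℤ)) N,
          chainCoupling β α (pin i) * |(chainGrad N (pin i) φ : ℝ)| ^ q := by
        refine sum_le_sum fun i hi => ?_
        rw [hgrad]
        gcongr
        exact rpow_neg_le_chainCoupling (by linarith) hβ hi
    _ = ∑ p ∈ (Icc (-(N : ℤ)) N).map pin,
          chainCoupling β α p * |(chainGrad N p φ : ℝ)| ^ q := by rw [sum_map]
    _ ≤ chainEnergy β α q φ.val := by
        rw [chainEnergy_eq_tsum hq]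
        refine (summable_chainCoupling_mul hα hq φ).sum_le_tsum _ fun p _ => ?_
        have := chainCoupling_nonneg (α := α) hβ p
        positivity

theorem summable_chainWeight (hα : 1 < α) (hq : 0 < q) (hβ : 0 < β) :
    Summable fun φ : ChainConfig N => chainWeight β α q φ.val := by
  let box := Icc (-(N : ℤ)) N
  let κ : ℝ := β * (2 * N + 1 : ℝ) ^ (-α)
  have hκ : 0 < κ := by positivity
  let restrict (φ : ChainConfig N) (i : box) : ℤ := φ.val i
  have hinj : Function.Injective restrict := fun φ ψ h => Subtype.ext <| funext fun k => by
    by_cases hk : k ∈ box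
    · exact congrFun h ⟨k, hk⟩
    · have hk' : (N : ℤ) < |k| := by rwa [mem_Icc, ← abs_le, not_le] at hk
      rw [φ.2 k hk', ψ.2 k hk']
  have hprod : Summable fun x : box → ℤ => ∏ i, Real.exp (-(κ * |(x i : ℝ)| ^ q)) :=
    (hasSum_prod_pi fun _ => summable_exp_neg_abs_rpow hq hκ).summable
  refine .of_nonneg_of_le (fun _ => (Real.exp_pos _).le) (fun φ => ?_)
    (hprod.comp_injective hinj)
  rw [Function.comp_apply, ← Real.exp_sum, sum_neg_distrib, chainWeight, Real.exp_le_exp,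
    neg_le_neg_iff, sum_coe_sort box fun i => κ * |(φ.val i : ℝ)| ^ q]
  exact sum_abs_rpow_le_chainEnergy hα hq hβ.le φ

theorem chainVar_le_of_tsum_le {C : ℝ} (hC : 0 ≤ C)
    (h : ∑' φ : ChainConfig N, chainWeight β α q φ.val * (φ.val 0 : ℝ) ^ 2
      ≤ C * ∑' φ : ChainConfig N, chainWeight β α q φ.val) :
    chainVar N β α q ≤ C := by
  have hZ : 0 ≤ chainZ N β α q := tsum_nonneg fun _ => (Real.exp_pos _).le
  simp only [mul_comm (chainWeight _ _ _ _)] at h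
  exact (sub_le_self _ (sq_nonneg _)).trans (div_le_of_le_mul₀ hZ hC h)

theorem chainVar_le_sum_sq_mul (hq₀ : 0 < q) (hq₂ : q ≤ 2) (hα : 1 < α) (hβ : 0 < β)
    {E : Finset (ℤ × ℤ)} (hE : ∀ p ∈ E, p.1 ≠ p.2) {θ : ℤ × ℤ → ℝ}
    (hθ : ∀ φ : ChainConfig N, ∑ p ∈ E, θ p * chainGrad N p φ = φ.val 0) :
    chainVar N β α q
      ≤ ∑ p ∈ E, θ p ^ 2 * (stretchedExpConst q * (chainCoupling β α p / 2) ^ (-2 / q)) := by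
  have hJ := chainCoupling_nonneg (α := α) hβ.le
  have hhalf : Summable fun φ : ChainConfig N =>
      Real.exp (-((∑' p, chainCoupling β α p * |(chainGrad N p φ : ℝ)| ^ q) / 2)) := by
    refine (summable_chainWeight hα hq₀ (half_pos hβ)).congr fun φ => ?_
    rw [← chainEnergy_eq_tsum hq₀, chainWeight, chainEnergy, chainEnergy]
    ring_nf
  have hmain := tsum_exp_neg_tsum_mul_linear_sq_le hq₀ hq₂ (chainGrad N) hJ
    (summable_chainCoupling_mul hα hq₀) hhalf (fun p hp => chainCoupling_pos hβ (hE p hp)) θ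
  simp only [hθ, ← chainEnergy_eq_tsum hq₀] at hmain
  have hC := stretchedExpConst_nonneg hq₀
  exact chainVar_le_of_tsum_le (sum_nonneg fun p _ => by have := hJ p; positivity) hmain

end Chain

section DyadicFlow

/-- The `k`-th dyadic block `{2^k - 1, …, 2^(k+1) - 2}`; block `0` is `{0}` and the blocks partition
the nonnegative integers. -/
noncomputable def dyadicBlock (k : ℕ) : Finset ℤ := Ico (2 ^ k - 1) (2 ^ (k + 1) - 1)

/-- The bonds between consecutive dyadic blocks, up to block `K`. -/
noncomputable def dyadicEdges (K : ℕ) : Finset (ℤ × ℤ) :=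
  (range K).biUnion fun k => dyadicBlock k ×ˢ dyadicBlock (k + 1)

/-- The unit flow from the origin which is spread uniformly over the `2^(2k+1)` bonds between the
dyadic blocks `k` and `k + 1`; the index `k` is recovered from the first endpoint. -/
noncomputable def dyadicFlow (p : ℤ × ℤ) : ℝ := (2 ^ (2 * Nat.log 2 (p.1 + 1).toNat + 1))⁻¹

theorem card_dyadicBlock (k : ℕ) : #(dyadicBlock k) = 2 ^ k := by
  have hlength : (2 : ℤ) ^ (k + 1) - 1 - (2 ^ k - 1) = ((2 ^ k : ℕ) : ℤ) := by push_cast; ring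
  rw [dyadicBlock, Int.card_Ico, hlength, Int.toNat_natCast]

theorem log_toNat_of_mem_dyadicBlock {k : ℕ} {i : ℤ} (hi : i ∈ dyadicBlock k) :
    Nat.log 2 (i + 1).toNat = k := by
  rw [dyadicBlock, mem_Ico] at hi
  have hpos : (0 : ℤ) < 2 ^ k := by positivity
  have hcast : ((i + 1).toNat : ℤ) = i + 1 := Int.toNat_of_nonneg (by lia)
  refine Nat.log_eq_of_pow_le_of_lt_pow ?_ ?_ <;> zify <;> lia

theorem lt_of_mem_dyadicBlock {k : ℕ} {i j : ℤ} (hi : i ∈ dyadicBlock k)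
    (hj : j ∈ dyadicBlock (k + 1)) : i < j :=
  (mem_Ico.1 hi).2.trans_le (mem_Ico.1 hj).1

theorem abs_sub_le_of_mem_dyadicBlock {k : ℕ} {i j : ℤ} (hi : i ∈ dyadicBlock k)
    (hj : j ∈ dyadicBlock (k + 1)) : |((i - j : ℤ) : ℝ)| ≤ 2 ^ (k + 2) := by
  have hlt := lt_of_mem_dyadicBlock hi hj
  rw [dyadicBlock, mem_Ico] at hi hj
  have hpos : (0 : ℤ) < 2 ^ k := by positivity
  have hdist : |i - j| ≤ 2 ^ (k + 2) := by
    rw [abs_of_neg (by lia)]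
    lia
  exact_mod_cast hdist

theorem ne_of_mem_dyadicEdges {K : ℕ} {p : ℤ × ℤ} (hp : p ∈ dyadicEdges K) : p.1 ≠ p.2 := by
  obtain ⟨k, -, hk⟩ := mem_biUnion.1 hp
  exact (lt_of_mem_dyadicBlock (mem_product.1 hk).1 (mem_product.1 hk).2).ne

theorem dyadicFlow_eq {k : ℕ} {p : ℤ × ℤ} (hp : p ∈ dyadicBlock k ×ˢ dyadicBlock (k + 1)) :
    dyadicFlow p = (2 ^ (2 * k + 1))⁻¹ := by
  rw [dyadicFlow, log_toNat_of_mem_dyadicBlock (mem_product.1 hp).1]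

theorem sum_dyadicEdges (K : ℕ) (f : ℤ × ℤ → ℝ) :
    ∑ p ∈ dyadicEdges K, f p
      = ∑ k ∈ range K, ∑ p ∈ dyadicBlock k ×ˢ dyadicBlock (k + 1), f p := by
  refine sum_biUnion fun k _ l _ hkl => disjoint_left.2 fun p hp hp' => hkl ?_
  rw [← log_toNat_of_mem_dyadicBlock (mem_product.1 hp).1,
    log_toNat_of_mem_dyadicBlock (mem_product.1 hp').1]

theorem sum_dyadicFlow_mul_sub (K : ℕ) (u : ℤ → ℝ) :
    ∑ p ∈ dyadicEdges K, dyadicFlow p * (u p.1 - u p.2)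
      = u 0 - (2 ^ K)⁻¹ * ∑ i ∈ dyadicBlock K, u i := by
  let avg (k : ℕ) : ℝ := (2 ^ k)⁻¹ * ∑ i ∈ dyadicBlock k, u i
  have hstep (k : ℕ) : ∑ p ∈ dyadicBlock k ×ˢ dyadicBlock (k + 1), dyadicFlow p * (u p.1 - u p.2)
      = avg k - avg (k + 1) := by
    rw [sum_congr rfl fun p hp => by rw [dyadicFlow_eq hp], ← mul_sum, sum_product]
    simp only [sum_sub_distrib, sum_const, card_dyadicBlock, nsmul_eq_mul, ← mul_sum, avg]
    push_cast
    field
  have havg₀ : avg 0 = u 0 := by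
    simp [avg, show dyadicBlock 0 = {0} by decide]
  rw [sum_dyadicEdges, sum_congr rfl fun k _ => hstep k, sum_range_sub', havg₀]

theorem sum_dyadicFlow_mul_chainGrad {K N : ℕ} (hK : N + 2 ≤ 2 ^ K) (φ : ChainConfig N) :
    ∑ p ∈ dyadicEdges K, dyadicFlow p * chainGrad N p φ = φ.val 0 := by
  have hout : ∑ i ∈ dyadicBlock K, (φ.val i : ℝ) = 0 := sum_eq_zero fun i hi => by
    rw [dyadicBlock, mem_Ico] at hi
    zify at hK
    rw [φ.2 i (lt_abs.2 (.inl (by lia))), Int.cast_zero]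
  simpa only [chainGrad_apply, Int.cast_sub, hout, mul_zero, sub_zero] using
    sum_dyadicFlow_mul_sub K fun i => (φ.val i : ℝ)

theorem sum_dyadicFlow_sq_mul_le {w : ℤ × ℤ → ℝ} {W : ℕ → ℝ} (K : ℕ)
    (hw : ∀ k, ∀ p ∈ dyadicBlock k ×ˢ dyadicBlock (k + 1), w p ≤ W k) :
    ∑ p ∈ dyadicEdges K, dyadicFlow p ^ 2 * w p ≤ ∑ k ∈ range K, (2 ^ (2 * k + 1))⁻¹ * W k := by
  rw [sum_dyadicEdges]
  refine sum_le_sum fun k _ => ?_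
  calc ∑ p ∈ dyadicBlock k ×ˢ dyadicBlock (k + 1), dyadicFlow p ^ 2 * w p
      ≤ ∑ p ∈ dyadicBlock k ×ˢ dyadicBlock (k + 1), ((2 ^ (2 * k + 1))⁻¹) ^ 2 * W k := by
        refine sum_le_sum fun p hp => ?_
        rw [dyadicFlow_eq hp]
        exact mul_le_mul_of_nonneg_left (hw k p hp) (by positivity)
    _ = (2 ^ (2 * k + 1))⁻¹ * W k := by
        rw [sum_const, card_product, card_dyadicBlock, card_dyadicBlock, nsmul_eq_mul]
        push_cast
        field_simp
        ring

variable {q α β : ℝ}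

theorem rpow_chainCoupling_half_le (hq : 0 < q) (hα : 0 ≤ α) (hβ : 0 ≤ β) {p : ℤ × ℤ} {ℓ : ℝ}
    (hℓ : |((p.1 - p.2 : ℤ) : ℝ)| ≤ ℓ) :
    (chainCoupling β α p / 2) ^ (-2 / q) ≤ (β / 2) ^ (-2 / q) * ℓ ^ (2 * α / q) := by
  have hexp : -α * (-2 / q) = 2 * α / q := by ring
  rw [chainCoupling, mul_div_right_comm, Real.mul_rpow (by positivity) (by positivity),
    ← Real.rpow_mul (abs_nonneg _), hexp]
  gcongr

theorem two_pow_rpow_eq (s : ℝ) (k : ℕ) :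
    ((2 : ℝ) ^ (k + 2)) ^ s
      = 8 * (2 ^ (s - 2)) ^ 2 * 2 ^ (2 * k + 1) * (2 ^ (s - 2)) ^ k := by
  have hs : (2 : ℝ) ^ s = 4 * 2 ^ (s - 2) := by
    rw [Real.rpow_sub two_pos]
    norm_num
    ring
  have hk : (2 : ℝ) ^ (2 * k) = 4 ^ k := by rw [pow_mul]; norm_num
  rw [← Real.rpow_natCast, ← Real.rpow_mul zero_le_two, mul_comm, Real.rpow_mul zero_le_two,
    Real.rpow_natCast, hs, mul_pow, pow_succ (2 : ℝ) (2 * k), hk]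
  ring

theorem exists_chainVar_le_geom_sum (hq₀ : 0 < q) (hq₂ : q ≤ 2) (hα : 1 < α) (hβ : 0 < β) :
    ∃ C : ℝ, 0 ≤ C ∧ ∀ N : ℕ, chainVar N β α q
      ≤ C * ∑ k ∈ range (Nat.log 2 N + 2), ((2 : ℝ) ^ (2 * α / q - 2)) ^ k := by
  have hc := stretchedExpConst_nonneg hq₀
  set A := stretchedExpConst q * (β / 2) ^ (-2 / q)
  set r := (2 : ℝ) ^ (2 * α / q - 2)
  refine ⟨A * (8 * r ^ 2), by positivity, fun N => ?_⟩
  set K := Nat.log 2 N + 2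
  have hK : N + 2 ≤ 2 ^ K := by
    have hN : N < 2 ^ (Nat.log 2 N + 1) := Nat.lt_pow_succ_log_self one_lt_two N
    have hdouble : 2 ^ K = 2 * 2 ^ (Nat.log 2 N + 1) := pow_succ' ..
    lia
  have hbond (k : ℕ) (p : ℤ × ℤ) (hp : p ∈ dyadicBlock k ×ˢ dyadicBlock (k + 1)) :
      stretchedExpConst q * (chainCoupling β α p / 2) ^ (-2 / q)
        ≤ A * (2 ^ (k + 2)) ^ (2 * α / q) := by
    rw [mul_assoc]
    exact mul_le_mul_of_nonneg_left (rpow_chainCoupling_half_le hq₀ (by linarith) hβ.le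
      (abs_sub_le_of_mem_dyadicBlock (mem_product.1 hp).1 (mem_product.1 hp).2)) hc
  calc chainVar N β α q
      ≤ ∑ p ∈ dyadicEdges K, dyadicFlow p ^ 2
          * (stretchedExpConst q * (chainCoupling β α p / 2) ^ (-2 / q)) :=
        chainVar_le_sum_sq_mul hq₀ hq₂ hα hβ (fun _ => ne_of_mem_dyadicEdges)
          (sum_dyadicFlow_mul_chainGrad hK)
    _ ≤ ∑ k ∈ range K, (2 ^ (2 * k + 1))⁻¹ * (A * (2 ^ (k + 2)) ^ (2 * α / q)) :=
        sum_dyadicFlow_sq_mul_le K hbond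
    _ = A * (8 * r ^ 2) * ∑ k ∈ range K, r ^ k := by
        rw [mul_sum]
        refine sum_congr rfl fun k _ => ?_
        rw [two_pow_rpow_eq]
        field

end DyadicFlow

section GeometricSum

theorem geom_sum_le_inv_one_sub {r : ℝ} (hr₀ : 0 ≤ r) (hr₁ : r < 1) (n : ℕ) :
    ∑ k ∈ range n, r ^ k ≤ (1 - r)⁻¹ := by
  rw [← tsum_geometric_of_lt_one hr₀ hr₁]
  exact (summable_geometric_of_lt_one hr₀ hr₁).sum_le_tsum _ fun k _ => pow_nonneg hr₀ k

theorem natLog_two_add_two_le {N : ℕ} (hN : 2 ≤ N) :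
    (Nat.log 2 N + 2 : ℝ) ≤ 3 / Real.log 2 * Real.log N := by
  have hlog : (Nat.log 2 N : ℝ) ≤ Real.log N / Real.log 2 := Real.natLog_le_logb N 2
  have hone : 1 ≤ Real.log N / Real.log 2 :=
    (one_le_div (Real.log_pos one_lt_two)).2 (Real.log_le_log two_pos (by exact_mod_cast hN))
  linear_combination hlog + 2 * hone

theorem geom_sum_two_rpow_le {s : ℝ} (hs : 0 < s) {N : ℕ} (hN : N ≠ 0) :
    ∑ k ∈ range (Nat.log 2 N + 2), ((2 : ℝ) ^ s) ^ k ≤ 4 ^ s / (2 ^ s - 1) * (N : ℝ) ^ s := by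
  have hr : 1 < (2 : ℝ) ^ s := Real.one_lt_rpow one_lt_two hs
  have hpow : (2 : ℝ) ^ (Nat.log 2 N + 2) ≤ 4 * N := by
    have : 2 ^ Nat.log 2 N ≤ N := Nat.pow_log_le_self 2 hN
    rw [pow_add]
    exact_mod_cast (by lia : 2 ^ Nat.log 2 N * 2 ^ 2 ≤ 4 * N)
  have hrpow : ((2 : ℝ) ^ s) ^ (Nat.log 2 N + 2) ≤ 4 ^ s * (N : ℝ) ^ s := by
    rw [← Real.mul_rpow zero_le_four N.cast_nonneg, ← Real.rpow_natCast,
      ← Real.rpow_mul zero_le_two, mul_comm s, Real.rpow_mul zero_le_two, Real.rpow_natCast]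
    exact Real.rpow_le_rpow (by positivity) hpow hs.le
  rw [geom_sum_eq hr.ne', div_mul_eq_mul_div]
  exact div_le_div_of_nonneg_right ((sub_le_self _ zero_le_one).trans hrpow) (sub_pos.2 hr).le

end GeometricSum

theorem qSOS_chain_upper_bounds_general {β q α : ℝ} (hβ : 0 < β) (hq₀ : 0 < q) (hq₂ : q ≤ 2)
    (hα : 1 < α) :
    ∃ C : ℝ, ∀ N : ℕ, 2 ≤ N →
      (α < q → chainVar N β α q ≤ C) ∧
      (α = q → chainVar N β α q ≤ C * Real.log N) ∧
      (q < α → chainVar N β α q ≤ C * (N : ℝ) ^ (2 * α / q - 2)) := by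
  obtain ⟨C, hC, hvar⟩ := exists_chainVar_le_geom_sum hq₀ hq₂ hα hβ
  rcases lt_trichotomy α q with hlt | heq | hgt
  · have hs : 2 * α / q - 2 < 0 := by rw [sub_neg, div_lt_iff₀ hq₀]; linarith
    have hr : (2 : ℝ) ^ (2 * α / q - 2) < 1 := Real.rpow_lt_one_of_one_lt_of_neg one_lt_two hs
    refine ⟨C * (1 - 2 ^ (2 * α / q - 2))⁻¹, fun N _ =>
      ⟨fun _ => ?_, fun h => absurd h hlt.ne, fun h => absurd h hlt.not_gt⟩⟩
    exact (hvar N).trans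
      (mul_le_mul_of_nonneg_left (geom_sum_le_inv_one_sub (by positivity) hr _) hC)
  · have hs : 2 * α / q - 2 = 0 := by rw [heq]; field
    refine ⟨C * (3 / Real.log 2), fun N hN =>
      ⟨fun h => absurd heq h.ne, fun _ => ?_, fun h => absurd heq h.ne'⟩⟩
    rw [mul_assoc]
    refine (hvar N).trans (mul_le_mul_of_nonneg_left ?_ hC)
    simpa [hs] using natLog_two_add_two_le hN
  · have hs : 0 < 2 * α / q - 2 := by rw [sub_pos, lt_div_iff₀ hq₀]; linarith
    refine ⟨C * (4 ^ (2 * α / q - 2) / (2 ^ (2 * α / q - 2) - 1)), fun N hN =>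
      ⟨fun h => absurd h hgt.not_gt, fun h => absurd h hgt.ne', fun _ => ?_⟩⟩
    rw [mul_assoc]
    exact (hvar N).trans (mul_le_mul_of_nonneg_left (geom_sum_two_rpow_le hs (by lia)) hC)

/-- **Upper bounds for the `q`-SOS long-range chain.**
For every `β ∈ (0,∞)`, every `q ∈ (0,2)` and every `α ∈ (1,∞)`, there exists `C_β < ∞`
such that for every `N ≥ 2`:
`Var^{q-SOS}_{N,β,α}[φ(0)] ≤ C_β` if `α < q`;
`Var^{q-SOS}_{N,β,α}[φ(0)] ≤ C_β ln N` if `α = q`; and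
`Var^{q-SOS}_{N,β,α}[φ(0)] ≤ C_β N^{2α/q − 2}` if `α > q`. -/
theorem qSOS_chain_upper_bounds
    (β : ℝ) (hβ : 0 < β) (q : ℝ) (hq₀ : 0 < q) (hq₂ : q < 2)
    (α : ℝ) (hα : 1 < α) :
    ∃ C : ℝ, ∀ N : ℕ, 2 ≤ N →
      (α < q → chainVar N β α q ≤ C) ∧
      (α = q → chainVar N β α q ≤ C * Real.log N) ∧
      (q < α → chainVar N β α q ≤ C * (N : ℝ) ^ (2 * α / q - 2)) :=
  qSOS_chain_upper_bounds_general hβ hq₀ hq₂.le hα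
end

section
/- Let X be a discrete Gaussian random variable of conductance λ > 0. Then there exist universal constants c > 0 and C < ∞ such that: (i) for every λ ∈ (0,∞), Var^{DG}_λ[X] ≤ 1/(2λ) (Gaussian domination); (ii) for every λ ∈ (0,1), c/λ ≤ Var^{DG}_λ[X] ≤ 1/(2λ); and (iii) for every λ ∈ (1,∞), c e^{−λ} ≤ Var^{DG}_λ[X] ≤ C e^{−λ}. -/
noncomputable section

/-- Partition function `∑_{k∈ℤ} e^{−λk²}` of the discrete Gaussian distribution of
conductance `λ`. -/
def dgZ (l : ℝ) : ℝ := ∑' k : ℤ, Real.exp (-(l * (k : ℝ) ^ 2))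

/-- Mean of a discrete Gaussian random variable of conductance `λ`. -/
def dgMean (l : ℝ) : ℝ :=
  (∑' k : ℤ, (k : ℝ) * Real.exp (-(l * (k : ℝ) ^ 2))) / dgZ l

/-- Variance of a discrete Gaussian random variable of conductance `λ`. -/
def dgVar (l : ℝ) : ℝ :=
  (∑' k : ℤ, (k : ℝ) ^ 2 * Real.exp (-(l * (k : ℝ) ^ 2))) / dgZ l - dgMean l ^ 2

end

/-!
Poisson summation gives `dgZ l = √(π / l) * dgZ (π² / l)`. Since `-dgVar` is the logarithmic
derivative of `dgZ`, differentiating the logarithm of this identity yields the duality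
`a * dgVar a + b * dgVar b = 1 / 2` whenever `a * b = π²`. As variances are nonnegative, this is
Gaussian domination. Because `dgZ` exceeds the unnormalised second moment by at most `1`, Gaussian
domination bounds `dgZ` on `[1, ∞)`, which makes the estimates at large conductance elementary.
Duality turns the exponential upper bound at `π² / l` into the lower bound at `l < 1`.
-/

open Real

/-- The unnormalised `n`-th moment `∑_{k∈ℤ} kⁿ e^{−λk²}` of the discrete Gaussian distribution of
conductance `λ`; the moment itself is the quotient of this sum by `dgZ`. -/
noncomputable def dgMoment (n : ℕ) (l : ℝ) : ℝ :=
  ∑' k : ℤ, (k : ℝ) ^ n * exp (-(l * (k : ℝ) ^ 2))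

lemma one_le_intCast_pow_of_even {n : ℕ} (hn : Even n) {k : ℤ} (hk : k ≠ 0) :
    1 ≤ (k : ℝ) ^ n := by
  have hpos : 0 < k ^ n := hn.pow_pos hk
  exact_mod_cast Int.add_one_le_of_lt hpos

lemma summable_int_pow_mul_exp_neg_mul_sq (n : ℕ) {l : ℝ} (hl : 0 < l) :
    Summable fun k : ℤ ↦ (k : ℝ) ^ n * exp (-(l * (k : ℝ) ^ 2)) := by
  refine ((summable_pow_mul_jacobiTheta₂_term_bound 0 (div_pos hl pi_pos) n).congr
    fun k ↦ ?_).of_norm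
  rw [norm_mul, norm_pow, norm_eq_abs, norm_of_nonneg (exp_pos _).le, Int.cast_abs]
  congr 2
  field_simp
  ring

lemma summable_exp_neg_mul_int_sq {l : ℝ} (hl : 0 < l) :
    Summable fun k : ℤ ↦ exp (-(l * (k : ℝ) ^ 2)) := by
  simpa only [pow_zero, one_mul] using summable_int_pow_mul_exp_neg_mul_sq 0 hl

lemma dgMoment_zero : dgMoment 0 = dgZ := by
  simp only [funext_iff, dgMoment, dgZ, pow_zero, one_mul, implies_true]

lemma dgMoment_of_odd {n : ℕ} (hn : Odd n) (l : ℝ) : dgMoment n l = 0 := by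
  have hneg : dgMoment n l = -dgMoment n l := by
    conv_lhs => rw [dgMoment, ← (Equiv.neg ℤ).tsum_eq]
    simp only [Equiv.neg_apply, Int.cast_neg, hn.neg_pow, neg_sq, neg_mul, tsum_neg, dgMoment]
  linarith

lemma dgVar_eq_dgMoment_two_div (l : ℝ) : dgVar l = dgMoment 2 l / dgZ l := by
  have hmean : dgMean l = dgMoment 1 l / dgZ l := by simp only [dgMean, dgMoment, pow_one]
  rw [dgVar, hmean, dgMoment_of_odd odd_one, dgMoment]
  ring

lemma one_le_dgZ {l : ℝ} (hl : 0 < l) : 1 ≤ dgZ l := by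
  simpa [dgZ] using (summable_exp_neg_mul_int_sq hl).le_tsum 0 fun k _ ↦ (exp_pos _).le

lemma dgZ_pos {l : ℝ} (hl : 0 < l) : 0 < dgZ l :=
  one_pos.trans_le (one_le_dgZ hl)

lemma dgMoment_nonneg {n : ℕ} (hn : Even n) (l : ℝ) : 0 ≤ dgMoment n l :=
  tsum_nonneg fun _ ↦ mul_nonneg (hn.pow_nonneg _) (exp_pos _).le

lemma exp_neg_le_dgMoment {n : ℕ} (hn : Even n) {l : ℝ} (hl : 0 < l) : exp (-l) ≤ dgMoment n l := by
  simpa [dgMoment] using (summable_int_pow_mul_exp_neg_mul_sq n hl).le_tsum 1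
    fun k _ ↦ mul_nonneg (hn.pow_nonneg _) (exp_pos _).le

lemma dgZ_le_one_add_dgMoment {n : ℕ} (hn : Even n) {l : ℝ} (hl : 0 < l) :
    dgZ l ≤ 1 + dgMoment n l := by
  refine hasSum_le (fun k ↦ ?_) (summable_exp_neg_mul_int_sq hl).hasSum
    ((hasSum_ite_eq (0 : ℤ) 1).add (summable_int_pow_mul_exp_neg_mul_sq n hl).hasSum)
  rcases eq_or_ne k 0 with rfl | hk
  · simp
  · simpa [hk] using le_mul_of_one_le_left (exp_pos _).le (one_le_intCast_pow_of_even hn hk)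

lemma dgMoment_le_exp_sub_mul_dgMoment {n : ℕ} (hn : Even n) (hn0 : n ≠ 0) {a b : ℝ}
    (ha : 0 < a) (hab : a ≤ b) :
    dgMoment n b ≤ exp (a - b) * dgMoment n a := by
  rw [dgMoment, dgMoment, ← tsum_mul_left]
  refine (summable_int_pow_mul_exp_neg_mul_sq n (ha.trans_le hab)).tsum_le_tsum (fun k ↦ ?_)
    ((summable_int_pow_mul_exp_neg_mul_sq n ha).mul_left _)
  rcases eq_or_ne k 0 with rfl | hk
  · simp [hn0]
  have hweight : exp (-(b * (k : ℝ) ^ 2)) ≤ exp (a - b) * exp (-(a * (k : ℝ) ^ 2)) := by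
    rw [← exp_add, exp_le_exp]
    nlinarith [one_le_intCast_pow_of_even even_two hk]
  calc (k : ℝ) ^ n * exp (-(b * (k : ℝ) ^ 2))
      ≤ (k : ℝ) ^ n * (exp (a - b) * exp (-(a * (k : ℝ) ^ 2))) :=
        mul_le_mul_of_nonneg_left hweight (hn.pow_nonneg _)
    _ = exp (a - b) * ((k : ℝ) ^ n * exp (-(a * (k : ℝ) ^ 2))) := mul_left_comm _ _ _

lemma dgVar_nonneg {l : ℝ} (hl : 0 < l) : 0 ≤ dgVar l := by
  rw [dgVar_eq_dgMoment_two_div]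
  exact div_nonneg (dgMoment_nonneg even_two l) (dgZ_pos hl).le

lemma dgVar_le_dgMoment_two {l : ℝ} (hl : 0 < l) : dgVar l ≤ dgMoment 2 l := by
  rw [dgVar_eq_dgMoment_two_div]
  exact div_le_self (dgMoment_nonneg even_two l) (one_le_dgZ hl)

lemma hasDerivAt_dgMoment (n : ℕ) {l : ℝ} (hl : 0 < l) :
    HasDerivAt (dgMoment n) (-dgMoment (n + 2) l) l := by
  have hterm (k : ℤ) (x : ℝ) : HasDerivAt (fun y ↦ (k : ℝ) ^ n * exp (-(y * (k : ℝ) ^ 2)))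
      (-((k : ℝ) ^ (n + 2) * exp (-(x * (k : ℝ) ^ 2)))) x := by
    have hexponent : HasDerivAt (fun y : ℝ ↦ -(y * (k : ℝ) ^ 2)) (-(k : ℝ) ^ 2) x :=
      (hasDerivAt_mul_const ((k : ℝ) ^ 2)).fun_neg
    exact (hexponent.exp.const_mul ((k : ℝ) ^ n)).congr_deriv (by ring)
  have hbound (k : ℤ) (x : ℝ) (hx : x ∈ Set.Ioi (l / 2)) :
      ‖-((k : ℝ) ^ (n + 2) * exp (-(x * (k : ℝ) ^ 2)))‖
        ≤ ‖(k : ℝ) ^ (n + 2) * exp (-(l / 2 * (k : ℝ) ^ 2))‖ := by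
    rw [norm_neg, norm_mul, norm_mul, norm_of_nonneg (exp_pos _).le, norm_of_nonneg (exp_pos _).le]
    gcongr
    exact hx.le
  have hl' : l ∈ Set.Ioi (l / 2) := half_lt_self hl
  have hderiv := hasDerivAt_tsum_of_isPreconnected
    (summable_int_pow_mul_exp_neg_mul_sq (n + 2) (half_pos hl)).norm isOpen_Ioi isPreconnected_Ioi
    (fun k x _ ↦ hterm k x) hbound hl' (summable_int_pow_mul_exp_neg_mul_sq n hl) hl'
  rwa [tsum_neg] at hderiv

lemma hasDerivAt_log_dgZ {l : ℝ} (hl : 0 < l) :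
    HasDerivAt (fun x ↦ log (dgZ x)) (-dgVar l) l := by
  have hderiv := hasDerivAt_dgMoment 0 hl
  rw [dgMoment_zero] at hderiv
  simpa only [dgVar_eq_dgMoment_two_div, neg_div] using hderiv.log (dgZ_pos hl).ne'

lemma dgZ_eq_sqrt_mul_dgZ {l : ℝ} (hl : 0 < l) : dgZ l = √(π / l) * dgZ (π ^ 2 / l) := by
  have hpoisson := tsum_exp_neg_mul_int_sq (div_pos hl pi_pos)
  rw [← sqrt_eq_rpow, one_div, ← sqrt_inv, inv_div] at hpoisson
  convert hpoisson using 1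
  · refine tsum_congr fun k ↦ congrArg exp ?_
    field_simp
  · refine congrArg _ (tsum_congr fun k ↦ congrArg exp ?_)
    field_simp

lemma log_dgZ_eq {l : ℝ} (hl : 0 < l) :
    log (dgZ l) = (log π - log l) / 2 + log (dgZ (π ^ 2 / l)) := by
  have hdual : 0 < π ^ 2 / l := by positivity
  rw [dgZ_eq_sqrt_mul_dgZ hl, log_mul (by positivity) (dgZ_pos hdual).ne',
    log_sqrt (by positivity), log_div pi_ne_zero hl.ne']

lemma mul_dgVar_add_mul_dgVar_eq_half {a b : ℝ} (ha : 0 < a) (hab : a * b = π ^ 2) :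
    a * dgVar a + b * dgVar b = 1 / 2 := by
  obtain rfl : b = π ^ 2 / a := by rw [← hab, mul_div_cancel_left₀ b ha.ne']
  have hdual : HasDerivAt (fun x ↦ (log π - log x) / 2 + log (dgZ (π ^ 2 / x)))
      (-a⁻¹ / 2 + -dgVar (π ^ 2 / a) * (π ^ 2 * -(a ^ 2)⁻¹)) a :=
    (((hasDerivAt_log ha.ne').const_sub (log π)).div_const 2).add
      ((hasDerivAt_log_dgZ (by positivity)).comp a ((hasDerivAt_inv ha.ne').const_mul (π ^ 2)))
  have heq : -dgVar a = -a⁻¹ / 2 + -dgVar (π ^ 2 / a) * (π ^ 2 * -(a ^ 2)⁻¹) :=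
    (hasDerivAt_log_dgZ ha).unique <| hdual.congr_of_eventuallyEq <|
      (eventually_gt_nhds ha).mono fun _ ↦ log_dgZ_eq
  rw [← neg_neg (dgVar a), heq]
  field_simp
  ring

lemma dgVar_le_one_div_two_mul {l : ℝ} (hl : 0 < l) : dgVar l ≤ 1 / (2 * l) := by
  have hdual : 0 < π ^ 2 / l := by positivity
  have hduality := mul_dgVar_add_mul_dgVar_eq_half hl (mul_div_cancel₀ (π ^ 2) hl.ne')
  have hnonneg := mul_nonneg hdual.le (dgVar_nonneg hdual)
  rw [le_div_iff₀ (by positivity)]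
  linarith

lemma dgMoment_two_le_dgZ_div_two {l : ℝ} (hl : 1 ≤ l) : dgMoment 2 l ≤ dgZ l / 2 := by
  have hl0 : 0 < l := by positivity
  have hvar : dgMoment 2 l / dgZ l ≤ 1 / 2 := by
    rw [← dgVar_eq_dgMoment_two_div]
    exact (dgVar_le_one_div_two_mul hl0).trans (by gcongr; linarith)
  rw [div_le_iff₀ (dgZ_pos hl0)] at hvar
  linarith

lemma dgZ_le_two {l : ℝ} (hl : 1 ≤ l) : dgZ l ≤ 2 := by
  linarith [dgMoment_two_le_dgZ_div_two hl,
    dgZ_le_one_add_dgMoment even_two (one_pos.trans_le hl)]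

lemma dgVar_le_exp_one_sub {l : ℝ} (hl : 1 ≤ l) : dgVar l ≤ exp (1 - l) := by
  have hone : dgMoment 2 1 ≤ 1 := by
    linarith [dgMoment_two_le_dgZ_div_two le_rfl, dgZ_le_two le_rfl]
  calc dgVar l ≤ dgMoment 2 l := dgVar_le_dgMoment_two (one_pos.trans_le hl)
    _ ≤ exp (1 - l) * dgMoment 2 1 :=
      dgMoment_le_exp_sub_mul_dgMoment even_two two_ne_zero one_pos hl
    _ ≤ exp (1 - l) := mul_le_of_le_one_right (exp_pos _).le hone

lemma exp_neg_div_two_le_dgVar {l : ℝ} (hl : 1 ≤ l) : exp (-l) / 2 ≤ dgVar l := by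
  have hl0 : 0 < l := one_pos.trans_le hl
  rw [dgVar_eq_dgMoment_two_div]
  exact div_le_div₀ (dgMoment_nonneg even_two l) (exp_neg_le_dgMoment even_two hl0) (dgZ_pos hl0)
    (dgZ_le_two hl)

lemma mul_exp_one_sub_le_quarter {x : ℝ} (hx : 9 ≤ x) : x * exp (1 - x) ≤ 1 / 4 := by
  have hexp : 4 * x ≤ exp (x - 1) := by
    nlinarith [quadratic_le_exp_of_nonneg (show 0 ≤ x - 1 by linarith)]
  rw [← neg_sub x 1, exp_neg, ← div_eq_mul_inv, div_le_iff₀ (exp_pos _)]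
  linarith

lemma one_quarter_div_le_dgVar {l : ℝ} (hl : 0 < l) (hl1 : l ≤ 1) : 1 / 4 / l ≤ dgVar l := by
  have hdual : 9 ≤ π ^ 2 / l := by
    rw [le_div_iff₀ hl]
    nlinarith [pi_gt_three]
  have hdual_small : π ^ 2 / l * dgVar (π ^ 2 / l) ≤ 1 / 4 :=
    (mul_le_mul_of_nonneg_left (dgVar_le_exp_one_sub (by linarith)) (by positivity)).trans
      (mul_exp_one_sub_le_quarter hdual)
  have hduality := mul_dgVar_add_mul_dgVar_eq_half hl (mul_div_cancel₀ (π ^ 2) hl.ne')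
  rw [div_le_iff₀ hl]
  linarith

/-- **Variance estimates for the discrete Gaussian random variable.**
There exist universal constants `c > 0` and `C < ∞` such that:
(i) for every `λ ∈ (0,∞)`, `Var^{DG}_λ[X] ≤ 1/(2λ)` (Gaussian domination);
(ii) for every `λ ∈ (0,1)`, `c/λ ≤ Var^{DG}_λ[X] ≤ 1/(2λ)`;
(iii) for every `λ ∈ (1,∞)`, `c e^{−λ} ≤ Var^{DG}_λ[X] ≤ C e^{−λ}`. -/
theorem discrete_gaussian_variance_estimates :
    ∃ c C : ℝ, 0 < c ∧
      (∀ l : ℝ, 0 < l → dgVar l ≤ 1 / (2 * l)) ∧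
      (∀ l : ℝ, 0 < l → l < 1 → c / l ≤ dgVar l ∧ dgVar l ≤ 1 / (2 * l)) ∧
      (∀ l : ℝ, 1 < l → c * Real.exp (-l) ≤ dgVar l ∧ dgVar l ≤ C * Real.exp (-l)) := by
  refine ⟨1 / 4, exp 1, by norm_num, fun l hl ↦ dgVar_le_one_div_two_mul hl,
    fun l hl hl1 ↦ ⟨one_quarter_div_le_dgVar hl hl1.le, dgVar_le_one_div_two_mul hl⟩,
    fun l hl ↦ ⟨?_, ?_⟩⟩
  · linarith [exp_neg_div_two_le_dgVar hl.le, exp_pos (-l)]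
  · rw [← exp_add, ← sub_eq_add_neg]
    exact dgVar_le_exp_one_sub hl.le
end
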